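/- Let S², d, μ, 𝒫, 𝒫₀, a > 1, the partitions {E_{j,k}}, points x_{j,k} ∈ E_{j,k}, functions φ_{j,k}, ψ_{j,k} ∈ ℳ_{x_{j,k}, a^j}, and the bounded operator S on L²(S²) with SF = ∑_{j,k} μ(E_{j,k}) ⟨F, φ_{j,k}⟩ ψ_{j,k} for F ∈ C¹(S²) be as in the summation operator theorem. Then: (c) for every F ∈ L²(S²), SF = ∑_{j∈ℤ} ∑_{k=1}^{N_j} μ(E_{j,k}) ⟨F, φ_{j,k}⟩ ψ_{j,k}, where the series converges unconditionally in L²(S²); and (d) for every F, G ∈ L²(S²), ⟨SF, G⟩ = ∑_{j∈ℤ} ∑_{k=1}^{N_j} μ(E_{j,k}) ⟨F, φ_{j,k}⟩ ⟨ψ_{j,k}, G⟩, where the series converges absolutely. -/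

import Mathlib

open Metric Manifold MeasureTheory
open scoped RealInnerProductSpace

noncomputable section

abbrev E3 : Type := EuclideanSpace ℝ (Fin 3)

/-- The unit sphere `S² ⊆ ℝ³`. -/
abbrev Sph : Type := Metric.sphere (0 : E3) 1

instance : Fact (Module.finrank ℝ E3 = 2 + 1) := ⟨by simp⟩

/-- The geodesic distance on the sphere, `d(x,y) = arccos⟨x,y⟩`. -/
def gdist (x y : Sph) : ℝ := Real.arccos ⟪(x : E3), (y : E3)⟫

/-- The surface measure on the sphere. -/
def sphMeasure : Measure Sph := (volume : Measure E3).toSphere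

/-- A vector field `X` applied to a function `ω : S² → ℂ`, i.e. `(Xω)(x)`. -/
def mderivApplyS (ω : Sph → ℂ) (x : Sph) (v : TangentSpace (𝓡 2) x) : ℂ :=
  mfderiv (𝓡 2) 𝓘(ℝ, ℂ) ω x v

/-- The class `ℳ_{x,t}`: smooth mean-zero functions `φ` on `S²` such that
`t^{2+deg Y} |(d(x,y)/t)^N (Yφ)(y)| ≤ 1` for all `y ∈ S²`, `Y ∈ 𝒫₀ = 𝒫 ∪ {id}`
and integers `0 ≤ N ≤ 4`, where `𝒫 = {X i}`. -/
def MClass {ι : Type*} (X : ι → (x : Sph) → TangentSpace (𝓡 2) x)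
    (x : Sph) (t : ℝ) : Set (Sph → ℂ) :=
  {φ | ContMDiff (𝓡 2) 𝓘(ℝ, ℂ) (⊤ : ℕ∞) φ ∧
    (∫ y, φ y ∂sphMeasure) = 0 ∧
    (∀ (y : Sph) (N : ℕ), N ≤ 4 → t ^ 2 * ((gdist x y / t) ^ N * ‖φ y‖) ≤ 1) ∧
    (∀ i : ι, ∀ (y : Sph) (N : ℕ), N ≤ 4 →
      t ^ 3 * ((gdist x y / t) ^ N * ‖mderivApplyS φ y (X i y)‖) ≤ 1)}

/-- The inner product `⟨F,φ⟩ = ∫ F φ̄ dμ` on the sphere. -/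
def sphInner (F φ : Sph → ℂ) : ℂ := ∫ y, F y * (starRingEnd ℂ) (φ y) ∂sphMeasure

/-!
Rescaled by `√μ(E_{j,k})`, the functions `φ_{j,k}` and `ψ_{j,k}` form Bessel families in `L²`.
Indeed each of them is a molecule: it decays at scale `a^j` away from `x_{j,k}`, has comparable
Lipschitz control (integrate along great circles, using that the fields of `𝒫` span), and has mean
zero. Subtracting from the wider of two molecules its value at the centre of the narrower one shows
that the inner products decay geometrically in the difference of the scales, while at a fixed scale
the weights `μ(E_{j,k})` turn the sum over `k` into an integral, which is finite because caps of
radius `r` have area `O(r²)`. Schur's test for the Gram matrix gives the Bessel bound.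

For Bessel families the series in (d) converges absolutely, and the partial sums of the series in
(c) are uniformly bounded operators, so it is enough to identify the sum on a dense subspace.
On a smooth function the series converges both pointwise and in `L²`, and the pointwise sum is
the one that defines `S` there.
-/

section BesselFamily

variable {𝕜 : Type*} [RCLike 𝕜] {H : Type*} [NormedAddCommGroup H] [InnerProductSpace 𝕜 H]
  {H' : Type*} [NormedAddCommGroup H'] [InnerProductSpace 𝕜 H'] {P : Type*}

lemma inner_sqrt_smul_smul_sqrt_smul {m : ℝ} (hm : 0 ≤ m) (v F : H) (w : H') :
    inner 𝕜 ((√m : 𝕜) • v) F • (√m : 𝕜) • w = ((m : 𝕜) * inner 𝕜 v F) • w := by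
  rw [inner_smul_left, RCLike.conj_ofReal, smul_smul, mul_right_comm, ← RCLike.ofReal_mul,
    Real.mul_self_sqrt hm]

lemma inner_sqrt_smul_mul_inner_sqrt_smul {m : ℝ} (hm : 0 ≤ m) (v F : H) (w G : H') :
    inner 𝕜 ((√m : 𝕜) • v) F * inner 𝕜 G ((√m : 𝕜) • w) =
      (m : 𝕜) * inner 𝕜 v F * inner 𝕜 G w := by
  rw [← inner_smul_right, inner_sqrt_smul_smul_sqrt_smul hm, inner_smul_right]

variable (𝕜) in
lemma norm_sum_sq_le_sum_norm_inner (s : Finset P) (x : P → H) :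
    ‖∑ p ∈ s, x p‖ ^ 2 ≤ ∑ p ∈ s, ∑ q ∈ s, ‖inner 𝕜 (x p) (x q)‖ := by
  calc ‖∑ p ∈ s, x p‖ ^ 2 = ‖inner 𝕜 (∑ p ∈ s, x p) (∑ q ∈ s, x q)‖ := by
        rw [inner_self_eq_norm_sq_to_K, norm_pow, RCLike.norm_ofReal, abs_norm]
    _ = ‖∑ p ∈ s, ∑ q ∈ s, inner 𝕜 (x p) (x q)‖ := by
        rw [sum_inner]; simp only [inner_sum]
    _ ≤ _ := (norm_sum_le _ _).trans (Finset.sum_le_sum fun p _ => norm_sum_le _ _)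

lemma sum_sum_mul_mul_le_of_row_sum_le {s : Finset P} {K : P → P → ℝ} (hK : ∀ p q, 0 ≤ K p q)
    (hsymm : ∀ p q, K p q = K q p) {m : P → ℝ} (hm : ∀ p, 0 ≤ m p) {C : ℝ}
    (hrow : ∀ p ∈ s, ∑ q ∈ s, m q * K p q ≤ C) (b : P → ℝ) :
    ∑ p ∈ s, ∑ q ∈ s, (b p * √(m p)) * (b q * √(m q)) * K p q ≤ C * ∑ p ∈ s, b p ^ 2 := by
  have am_gm (p q : P) : (b p * √(m p)) * (b q * √(m q)) * K p q ≤
      (b p ^ 2 * (m q * K p q)) / 2 + (b q ^ 2 * (m p * K q p)) / 2 := by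
    have key := mul_nonneg (sq_nonneg (b p * √(m q) - b q * √(m p))) (hK p q)
    rw [hsymm q p]
    linear_combination key / 2 + (b p ^ 2 * K p q / 2) * Real.sq_sqrt (hm q) +
      (b q ^ 2 * K p q / 2) * Real.sq_sqrt (hm p)
  calc ∑ p ∈ s, ∑ q ∈ s, (b p * √(m p)) * (b q * √(m q)) * K p q
      ≤ ∑ p ∈ s, ∑ q ∈ s,
          ((b p ^ 2 * (m q * K p q)) / 2 + (b q ^ 2 * (m p * K q p)) / 2) :=
        Finset.sum_le_sum fun p _ => Finset.sum_le_sum fun q _ => am_gm p q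
    _ = ∑ p ∈ s, b p ^ 2 * ∑ q ∈ s, m q * K p q := by
        simp only [Finset.sum_add_distrib]
        rw [Finset.sum_comm (f := fun p q => (b q ^ 2 * (m p * K q p)) / 2)]
        simp only [← Finset.sum_add_distrib, add_halves, Finset.mul_sum]
    _ ≤ ∑ p ∈ s, b p ^ 2 * C :=
        Finset.sum_le_sum fun p hp => mul_le_mul_of_nonneg_left (hrow p hp) (sq_nonneg _)
    _ = C * ∑ p ∈ s, b p ^ 2 := by rw [← Finset.sum_mul, mul_comm]

variable (𝕜) in
/-- A Bessel family with bound `C`: the upper frame bound, in its synthesis form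
`‖∑ cₚ vₚ‖² ≤ C ∑ |cₚ|²`. -/
structure IsBesselFamily (v : P → H) (C : ℝ) : Prop where
  nonneg : 0 ≤ C
  norm_sum_sq_le : ∀ (s : Finset P) (c : P → 𝕜),
    ‖∑ p ∈ s, c p • v p‖ ^ 2 ≤ C * ∑ p ∈ s, ‖c p‖ ^ 2

namespace IsBesselFamily

theorem of_row_sum_le {v : P → H} {m : P → ℝ} (hm : ∀ p, 0 ≤ m p) {C : ℝ} (hC : 0 ≤ C)
    (hrow : ∀ (s : Finset P) (p : P), ∑ q ∈ s, m q * ‖inner 𝕜 (v p) (v q)‖ ≤ C) :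
    IsBesselFamily 𝕜 (fun p => (√(m p) : 𝕜) • v p) C where
  nonneg := hC
  norm_sum_sq_le s c := by
    have norm_inner_eq (p q : P) :
        ‖inner 𝕜 (c p • (√(m p) : 𝕜) • v p) (c q • (√(m q) : 𝕜) • v q)‖ =
          (‖c p‖ * √(m p)) * (‖c q‖ * √(m q)) * ‖inner 𝕜 (v p) (v q)‖ := by
      simp only [smul_smul, inner_smul_left, inner_smul_right, norm_mul, RCLike.norm_conj,
        RCLike.norm_ofReal, abs_of_nonneg (Real.sqrt_nonneg _)]
      ring
    refine (norm_sum_sq_le_sum_norm_inner 𝕜 s _).trans ?_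
    simp only [norm_inner_eq]
    exact sum_sum_mul_mul_le_of_row_sum_le (fun _ _ => norm_nonneg _)
      (fun _ _ => norm_inner_symm _ _) hm (fun p _ => hrow s p) _

variable {v : P → H} {w : P → H'} {C D : ℝ}

theorem sum_norm_inner_sq_le (hv : IsBesselFamily 𝕜 v C) (F : H) (s : Finset P) :
    ∑ p ∈ s, ‖inner 𝕜 (v p) F‖ ^ 2 ≤ C * ‖F‖ ^ 2 := by
  set B := ∑ p ∈ s, ‖inner 𝕜 (v p) F‖ ^ 2
  set g := ∑ p ∈ s, inner 𝕜 (v p) F • v p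
  have hB : 0 ≤ B := Finset.sum_nonneg fun p _ => sq_nonneg _
  have inner_g_F : inner 𝕜 g F = (B : 𝕜) := by
    simp only [g, B, sum_inner, inner_smul_left, RCLike.conj_mul, map_sum, RCLike.ofReal_pow]
  have hBg : B ≤ ‖g‖ * ‖F‖ := by
    simpa [inner_g_F, abs_of_nonneg hB] using norm_inner_le_norm (𝕜 := 𝕜) g F
  have hBB : B * B ≤ C * ‖F‖ ^ 2 * B := by
    calc B * B ≤ (‖g‖ * ‖F‖) * (‖g‖ * ‖F‖) := mul_self_le_mul_self hB hBg
      _ = ‖g‖ ^ 2 * ‖F‖ ^ 2 := by ring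
      _ ≤ C * B * ‖F‖ ^ 2 := mul_le_mul_of_nonneg_right (hv.norm_sum_sq_le s _) (sq_nonneg _)
      _ = C * ‖F‖ ^ 2 * B := by ring
  rcases hB.eq_or_lt with h | h
  · rw [← h]; exact mul_nonneg hv.nonneg (sq_nonneg _)
  · exact le_of_mul_le_mul_right hBB h

theorem summable_norm_inner_sq (hv : IsBesselFamily 𝕜 v C) (F : H) :
    Summable fun p => ‖inner 𝕜 (v p) F‖ ^ 2 :=
  summable_of_sum_le (fun _ => sq_nonneg _) (hv.sum_norm_inner_sq_le F)

theorem summable_smul [CompleteSpace H] (hv : IsBesselFamily 𝕜 v C) {c : P → 𝕜}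
    (hc : Summable fun p => ‖c p‖ ^ 2) : Summable fun p => c p • v p := by
  rw [summable_iff_vanishing_norm]
  intro ε hε
  have hC : 0 < C + 1 := add_pos_of_nonneg_of_pos hv.nonneg one_pos
  obtain ⟨s, hs⟩ := summable_iff_vanishing_norm.1 hc (ε ^ 2 / (C + 1)) (by positivity)
  refine ⟨s, fun t ht => lt_of_pow_lt_pow_left₀ 2 hε.le ?_⟩
  have tail_nonneg : 0 ≤ ∑ p ∈ t, ‖c p‖ ^ 2 := Finset.sum_nonneg fun p _ => sq_nonneg _
  calc ‖∑ p ∈ t, c p • v p‖ ^ 2 ≤ C * ∑ p ∈ t, ‖c p‖ ^ 2 := hv.norm_sum_sq_le t c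
    _ ≤ (∑ p ∈ t, ‖c p‖ ^ 2) * (C + 1) := by linarith
    _ < ε ^ 2 := (lt_div_iff₀ hC).1 ((le_abs_self _).trans_lt (hs t ht))

theorem summable_norm_inner_mul_inner (hv : IsBesselFamily 𝕜 v C) (hw : IsBesselFamily 𝕜 w D)
    (F : H) (G : H') : Summable fun p => ‖inner 𝕜 (v p) F * inner 𝕜 G (w p)‖ := by
  refine .of_nonneg_of_le (fun _ => norm_nonneg _) (fun p => ?_)
    ((hv.summable_norm_inner_sq F).add (hw.summable_norm_inner_sq G))
  rw [norm_mul, norm_inner_symm G]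
  nlinarith [sq_nonneg (‖inner 𝕜 (v p) F‖ - ‖inner 𝕜 (w p) G‖),
    sq_nonneg (‖inner 𝕜 (v p) F‖ + ‖inner 𝕜 (w p) G‖)]

theorem norm_sum_inner_smul_le (hv : IsBesselFamily 𝕜 v C) (hw : IsBesselFamily 𝕜 w D)
    (s : Finset P) (F : H) : ‖∑ p ∈ s, inner 𝕜 (v p) F • w p‖ ≤ √(D * C) * ‖F‖ := by
  refine le_of_sq_le_sq ?_ (by positivity)
  calc ‖∑ p ∈ s, inner 𝕜 (v p) F • w p‖ ^ 2
      ≤ D * ∑ p ∈ s, ‖inner 𝕜 (v p) F‖ ^ 2 := hw.norm_sum_sq_le s _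
    _ ≤ D * (C * ‖F‖ ^ 2) :=
        mul_le_mul_of_nonneg_left (hv.sum_norm_inner_sq_le F s) hw.nonneg
    _ = (√(D * C) * ‖F‖) ^ 2 := by
        rw [mul_pow, Real.sq_sqrt (mul_nonneg hw.nonneg hv.nonneg), mul_assoc]

theorem hasSum_of_denseRange {Y : Type*} {f : Y → H} (hf : DenseRange f)
    (hv : IsBesselFamily 𝕜 v C) (hw : IsBesselFamily 𝕜 w D) (S : H →L[𝕜] H')
    (hS : ∀ y, HasSum (fun p => inner 𝕜 (v p) (f y) • w p) (S (f y))) (F : H) :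
    HasSum (fun p => inner 𝕜 (v p) F • w p) (S F) := by
  let T (s : Finset P) : H →L[𝕜] H' := ∑ p ∈ s, InnerProductSpace.rankOne 𝕜 (w p) (v p)
  have T_apply (s : Finset P) (F : H) : T s F = ∑ p ∈ s, inner 𝕜 (v p) F • w p := by simp [T]
  have T_bounded : ∃ K, ∀ s F, ‖T s F‖ ≤ K * ‖F‖ :=
    ⟨√(D * C), fun s F => by rw [T_apply]; exact hv.norm_sum_inner_smul_le hw s F⟩
  have T_equicontinuous : Equicontinuous fun s => (T s : H → H') :=
    ((NormedSpace.equicontinuous_TFAE T).out 3 1).1 T_bounded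
  simp only [HasSum, ← T_apply] at hS ⊢
  exact isClosed_property hf
    (T_equicontinuous.isClosed_setOfPred_tendsto S.continuous) hS F

end IsBesselFamily

end BesselFamily

section Decay

variable {α : Type*} [PseudoMetricSpace α]

/-- The polynomially decaying bump `t⁻ᵈ (1 + dist x y / t)⁻ⁿ` of height `t⁻ᵈ` and width `t`
about `x`; on a `d`-dimensional space it has bounded mass for `n > d`. -/
def decay (d n : ℕ) (t : ℝ) (x y : α) : ℝ := (t ^ d)⁻¹ * ((1 + dist x y / t) ^ n)⁻¹

variable (d n : ℕ) {t : ℝ}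

lemma decay_symm (t : ℝ) (x y : α) : decay d n t x y = decay d n t y x := by
  simp only [decay, dist_comm]

lemma decay_pos (ht : 0 < t) (x y : α) : 0 < decay d n t x y := by
  unfold decay; positivity

lemma decay_nonneg (ht : 0 < t) (x y : α) : 0 ≤ decay d n t x y := (decay_pos d n ht x y).le

lemma continuous_decay (ht : 0 < t) (x : α) : Continuous (decay d n t x) := by
  unfold decay
  exact continuous_const.mul (Continuous.inv₀ (by fun_prop) fun y => by positivity)

lemma decay_le_inv_pow (ht : 0 < t) (x y : α) : decay d n t x y ≤ (t ^ d)⁻¹ := by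
  have : 1 ≤ (1 + dist x y / t) ^ n := one_le_pow₀ (le_add_of_nonneg_right (by positivity))
  exact mul_le_of_le_one_right (by positivity) (inv_le_one_of_one_le₀ this)

lemma decay_succ_le (ht : 0 < t) (x y : α) : decay d (n + 1) t x y ≤ decay d n t x y := by
  have : 0 ≤ dist x y / t := by positivity
  unfold decay
  gcongr
  · linarith
  · exact n.le_succ

lemma dist_div_mul_decay_succ_le (ht : 0 < t) (x y : α) :
    dist x y / t * decay d (n + 1) t x y ≤ decay d n t x y := by
  have : 0 ≤ dist x y / t := by positivity
  unfold decay
  rw [mul_left_comm, ← div_eq_mul_inv (dist x y / t)]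
  gcongr
  rw [div_le_iff₀ (by positivity), pow_succ, ← mul_assoc, inv_mul_cancel₀ (by positivity), one_mul]
  linarith

variable {d n} in
lemma decay_le_two_pow_mul_decay (ht : 0 < t) {x z : α} (h : dist x z ≤ t) (y : α) :
    decay d n t z y ≤ 2 ^ n * decay d n t x y := by
  have dist_le : dist x y / t ≤ 1 + dist z y / t := by
    rw [div_le_iff₀ ht, add_mul, div_mul_cancel₀ _ ht.ne']
    linarith [dist_triangle x z y]
  have hz : 0 ≤ dist z y / t := by positivity
  have pow_le : (1 + dist x y / t) ^ n ≤ 2 ^ n * (1 + dist z y / t) ^ n := by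
    rw [← mul_pow]
    gcongr
    linarith
  have inv_le : ((1 + dist z y / t) ^ n)⁻¹ ≤ 2 ^ n * ((1 + dist x y / t) ^ n)⁻¹ := by
    rw [← div_eq_mul_inv, le_div_iff₀ (by positivity), inv_mul_le_iff₀ (by positivity), mul_comm]
    exact pow_le
  unfold decay
  rw [mul_left_comm]
  gcongr

variable {d n} in
lemma le_two_pow_mul_decay_of_mul_pow_le (ht : 0 < t) {x y : α} {b B u : ℝ} (hb : 0 ≤ b)
    (hu : dist x y / t ≤ u) (h_zero : t ^ d * b ≤ B) (h_pow : t ^ d * (u ^ n * b) ≤ B) :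
    b ≤ 2 ^ n * B * decay d n t x y := by
  set v := dist x y / t with hv
  have : 0 ≤ v := by positivity
  suffices (1 + v) ^ n * (t ^ d * b) ≤ 2 ^ n * B by
    rw [decay, ← hv, ← mul_inv, ← div_eq_mul_inv, le_div_iff₀ (by positivity)]
    linarith
  rcases le_total v 1 with hv1 | hv1
  · gcongr
    linarith
  · calc (1 + v) ^ n * (t ^ d * b) ≤ (2 * u) ^ n * (t ^ d * b) := by gcongr; linarith
      _ = 2 ^ n * (t ^ d * (u ^ n * b)) := by ring
      _ ≤ 2 ^ n * B := by gcongr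

lemma exists_dyadic_decay_le (ht : 0 < t) (x y : α) (M : ℕ) (h : dist x y < 2 ^ M * t) :
    ∃ i ≤ M, dist x y < 2 ^ i * t ∧ decay d n t x y ≤ (t ^ d)⁻¹ * (2 / 2 ^ i) ^ n := by
  induction M with
  | zero =>
    refine ⟨0, le_rfl, h, (decay_le_inv_pow d n ht x y).trans ?_⟩
    exact le_mul_of_one_le_right (by positivity) (one_le_pow₀ (by norm_num))
  | succ M ih =>
    rcases lt_or_ge (dist x y) (2 ^ M * t) with hlt | hge
    · obtain ⟨i, hi, hi'⟩ := ih hlt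
      exact ⟨i, hi.trans M.le_succ, hi'⟩
    · refine ⟨M + 1, le_rfl, h, ?_⟩
      have : (2 : ℝ) ^ M ≤ 1 + dist x y / t :=
        ((le_div_iff₀ ht).2 hge).trans (le_add_of_nonneg_left zero_le_one)
      rw [decay, pow_succ' 2 M, div_mul_cancel_left₀ two_ne_zero, inv_pow]
      gcongr

lemma decay_le_sum_indicator_ball (ht : 0 < t) (x y : α) {M : ℕ} (h : dist x y < 2 ^ M * t) :
    decay d n t x y ≤ ∑ i ∈ Finset.range (M + 1),
      (ball x (2 ^ i * t)).indicator (fun _ => (t ^ d)⁻¹ * (2 / 2 ^ i) ^ n) y := by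
  obtain ⟨i, hi, hyi, hle⟩ := exists_dyadic_decay_le d n ht x y M h
  rw [← Set.indicator_of_mem (mem_ball'.2 hyi) fun _ => (t ^ d)⁻¹ * (2 / 2 ^ i) ^ n] at hle
  exact hle.trans (Finset.single_le_sum
    (f := fun i => (ball x (2 ^ i * t)).indicator (fun _ => (t ^ d)⁻¹ * (2 / 2 ^ i) ^ n) y)
    (fun i _ => Set.indicator_nonneg (fun _ _ => by positivity) y)
    (Finset.mem_range_succ_iff.2 hi))

end Decay

section UpperRegular

variable {α : Type*} [PseudoMetricSpace α] [MeasurableSpace α] {μ : Measure α} {d : ℕ} {C : ℝ}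

/-- Upper Ahlfors `d`-regularity: balls of radius `r` have measure at most `C rᵈ`. -/
def IsUpperRegular (μ : Measure α) (d : ℕ) (C : ℝ) : Prop :=
  ∀ x, ∀ r > 0, μ.real (ball x r) ≤ C * r ^ d

lemma IsUpperRegular.nonneg (hμ : IsUpperRegular μ d C) (x : α) : 0 ≤ C := by
  simpa using measureReal_nonneg.trans (hμ x 1 one_pos)

variable [CompactSpace α] [BorelSpace α] [IsFiniteMeasure μ] {t : ℝ}

lemma integrable_of_continuous {V : Type*} [NormedAddCommGroup V] {f : α → V}
    (hf : Continuous f) : Integrable f μ :=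
  hf.integrable_of_hasCompactSupport (.of_compactSpace f)

theorem IsUpperRegular.integral_decay_le (hμ : IsUpperRegular μ d C) (ht : 0 < t) (x : α) :
    ∫ y, decay d (d + 1) t x y ∂μ ≤ 2 ^ (d + 2) * C := by
  obtain ⟨M, hM⟩ := pow_unbounded_of_one_lt (diam (Set.univ : Set α) / t) one_lt_two
  have dist_lt (y : α) : dist x y < 2 ^ M * t :=
    (dist_le_diam_of_mem isBounded_of_compactSpace (Set.mem_univ x) (Set.mem_univ y)).trans_lt
      ((div_lt_iff₀ ht).1 hM)
  let c (i : ℕ) : ℝ := (t ^ d)⁻¹ * (2 / 2 ^ i) ^ (d + 1)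
  have integrable_indicator (i : ℕ) :
      Integrable ((ball x (2 ^ i * t)).indicator fun _ => c i) μ :=
    (integrable_const _).indicator measurableSet_ball
  have annulus_le (i : ℕ) : μ.real (ball x (2 ^ i * t)) * c i ≤ 2 ^ (d + 1) * C * (1 / 2) ^ i := by
    calc μ.real (ball x (2 ^ i * t)) * c i ≤ C * (2 ^ i * t) ^ d * c i :=
          mul_le_mul_of_nonneg_right (hμ x _ (by positivity)) (by positivity)
      _ = 2 ^ (d + 1) * C * (1 / 2) ^ i := by
          simp only [c, mul_pow, div_pow, one_pow, pow_succ]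
          field_simp
  have hC := hμ.nonneg x
  calc ∫ y, decay d (d + 1) t x y ∂μ
      ≤ ∫ y, ∑ i ∈ Finset.range (M + 1), (ball x (2 ^ i * t)).indicator (fun _ => c i) y ∂μ :=
        integral_mono (integrable_of_continuous (continuous_decay d (d + 1) ht x))
          (integrable_finsetSum _ fun i _ => integrable_indicator i)
          fun y => decay_le_sum_indicator_ball d (d + 1) ht x y (dist_lt y)
    _ = ∑ i ∈ Finset.range (M + 1), μ.real (ball x (2 ^ i * t)) * c i := by
        rw [integral_finsetSum _ fun i _ => integrable_indicator i]
        simp only [integral_indicator_const _ measurableSet_ball, smul_eq_mul]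
    _ ≤ ∑ i ∈ Finset.range (M + 1), 2 ^ (d + 1) * C * (1 / 2) ^ i :=
        Finset.sum_le_sum fun i _ => annulus_le i
    _ ≤ 2 ^ (d + 1) * C * 2 := by
        rw [← Finset.mul_sum]
        exact mul_le_mul_of_nonneg_left (sum_geometric_two_le _) (by positivity)
    _ = 2 ^ (d + 2) * C := by ring

lemma IsUpperRegular.integral_decay_succ_le (hμ : IsUpperRegular μ d C) (ht : 0 < t) (x : α) :
    ∫ y, decay d (d + 2) t x y ∂μ ≤ 2 ^ (d + 2) * C :=
  (integral_mono (integrable_of_continuous (continuous_decay _ _ ht x))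
    (integrable_of_continuous (continuous_decay _ _ ht x))
    (decay_succ_le d (d + 1) ht x)).trans (hμ.integral_decay_le ht x)

lemma IsUpperRegular.integral_dist_mul_decay_le (hμ : IsUpperRegular μ d C) (hd : d ≠ 0)
    (ht : 0 < t) (x : α) :
    ∫ y, dist x y * decay d (d + 2) t x y ∂μ ≤
      (2 ^ (d + 2) * C + diam (Set.univ : Set α) * μ.real Set.univ) * min t t⁻¹ := by
  have hC := hμ.nonneg x
  have hcont := continuous_decay d (d + 1) ht x
  have hcont' := continuous_decay d (d + 2) ht x
  rcases le_total t 1 with h1 | h1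
  · have pointwise_le (y : α) : dist x y * decay d (d + 2) t x y ≤ t * decay d (d + 1) t x y := by
      calc dist x y * decay d (d + 2) t x y = t * (dist x y / t * decay d (d + 2) t x y) := by
            field_simp
        _ ≤ _ := mul_le_mul_of_nonneg_left (dist_div_mul_decay_succ_le d (d + 1) ht x y) ht.le
    calc ∫ y, dist x y * decay d (d + 2) t x y ∂μ ≤ ∫ y, t * decay d (d + 1) t x y ∂μ :=
          integral_mono (integrable_of_continuous (by fun_prop))
            (integrable_of_continuous (by fun_prop)) pointwise_le
      _ ≤ 2 ^ (d + 2) * C * t := by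
          rw [integral_const_mul, mul_comm]
          exact mul_le_mul_of_nonneg_right (hμ.integral_decay_le ht x) ht.le
      _ ≤ _ := by
          rw [min_eq_left (h1.trans ((one_le_inv₀ ht).2 h1))]
          gcongr
          exact le_add_of_nonneg_right (by positivity)
  · have inv_pow_le : (t ^ d)⁻¹ ≤ t⁻¹ := inv_anti₀ ht (le_self_pow₀ h1 hd)
    have pointwise_le (y : α) :
        dist x y * decay d (d + 2) t x y ≤ diam (Set.univ : Set α) * t⁻¹ :=
      mul_le_mul
        (dist_le_diam_of_mem isBounded_of_compactSpace (Set.mem_univ x) (Set.mem_univ y))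
        ((decay_le_inv_pow d (d + 2) ht x y).trans inv_pow_le) (decay_nonneg _ _ ht x y) diam_nonneg
    calc ∫ y, dist x y * decay d (d + 2) t x y ∂μ
        ≤ ∫ _, diam (Set.univ : Set α) * t⁻¹ ∂μ :=
          integral_mono (integrable_of_continuous (by fun_prop)) (integrable_const _) pointwise_le
      _ = diam (Set.univ : Set α) * μ.real Set.univ * t⁻¹ := by
          rw [integral_const, smul_eq_mul]; ring
      _ ≤ _ := by
          rw [min_eq_right ((inv_le_one_of_one_le₀ h1).trans h1)]
          gcongr
          exact le_add_of_nonneg_left (by positivity)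

end UpperRegular

section CellFamily

variable {α : Type*} [PseudoMetricSpace α] [MeasurableSpace α] {κ : Type*} {t s : ℝ}
  {E : κ → Set α} {x : κ → α}

/-- Disjoint measurable cells `E k` of radius at most `t` about the marked points `x k`. -/
structure IsCellFamily (t : ℝ) (E : κ → Set α) (x : κ → α) : Prop where
  measurableSet : ∀ k, MeasurableSet (E k)
  pairwise_disjoint : Pairwise fun k k' => Disjoint (E k) (E k')
  subset_closedBall : ∀ k, E k ⊆ closedBall (x k) t

variable {μ : Measure α} [CompactSpace α] [BorelSpace α] [IsFiniteMeasure μ] {d n : ℕ}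

lemma IsCellFamily.sum_measureReal_mul_decay_le (hE : IsCellFamily t E x) (hs : 0 < s)
    (hts : t ≤ s) (F : Finset κ) (y : α) :
    ∑ k ∈ F, μ.real (E k) * decay d n s (x k) y ≤ 2 ^ n * ∫ z, decay d n s z y ∂μ := by
  have hint : Integrable (fun z => 2 ^ n * decay d n s z y) μ := by
    simp only [decay_symm d n s _ y]
    exact (integrable_of_continuous (continuous_decay d n hs y)).const_mul _
  have cell_le (k : κ) :
      μ.real (E k) * decay d n s (x k) y ≤ ∫ z in E k, 2 ^ n * decay d n s z y ∂μ := by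
    rw [← smul_eq_mul, ← setIntegral_const]
    refine setIntegral_mono_on (integrable_const _) hint.integrableOn (hE.measurableSet k) ?_
    exact fun z hz =>
      decay_le_two_pow_mul_decay hs ((hE.subset_closedBall k hz).trans hts) y
  calc ∑ k ∈ F, μ.real (E k) * decay d n s (x k) y
      ≤ ∑ k ∈ F, ∫ z in E k, 2 ^ n * decay d n s z y ∂μ := Finset.sum_le_sum fun k _ => cell_le k
    _ = ∫ z in ⋃ k ∈ F, E k, 2 ^ n * decay d n s z y ∂μ :=
        (integral_biUnion_finset F (fun k _ => hE.measurableSet k)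
          (hE.pairwise_disjoint.set_pairwise _) fun k _ => hint.integrableOn).symm
    _ ≤ ∫ z, 2 ^ n * decay d n s z y ∂μ :=
        setIntegral_le_integral hint (.of_forall fun z =>
          mul_nonneg (by positivity) (decay_nonneg d n hs z y))
    _ = 2 ^ n * ∫ z, decay d n s z y ∂μ := integral_const_mul _ _

lemma IsCellFamily.sum_measureReal_mul_decay_le_const {C : ℝ} (hμ : IsUpperRegular μ d C)
    (hE : IsCellFamily t E x) (hs : 0 < s) (hts : t ≤ s) (F : Finset κ) (y : α) :
    ∑ k ∈ F, μ.real (E k) * decay d (d + 1) s (x k) y ≤ 2 ^ (d + 1) * (2 ^ (d + 2) * C) := by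
  refine (hE.sum_measureReal_mul_decay_le hs hts F y).trans ?_
  simp only [decay_symm d (d + 1) s _ y]
  exact mul_le_mul_of_nonneg_left (hμ.integral_decay_le hs y) (by positivity)

lemma IsCellFamily.sum_measureReal_mul_decay_succ_le_const {C : ℝ} (hμ : IsUpperRegular μ d C)
    (hE : IsCellFamily t E x) (hs : 0 < s) (hts : t ≤ s) (F : Finset κ) (y : α) :
    ∑ k ∈ F, μ.real (E k) * decay d (d + 2) s (x k) y ≤ 2 ^ (d + 1) * (2 ^ (d + 2) * C) :=
  (Finset.sum_le_sum fun k _ => mul_le_mul_of_nonneg_left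
    (decay_succ_le d (d + 1) hs (x k) y) measureReal_nonneg).trans
    (hE.sum_measureReal_mul_decay_le_const hμ hs hts F y)

end CellFamily

section Molecule

variable {𝕜 : Type*} [RCLike 𝕜] {V : Type*} [NormedAddCommGroup V] [InnerProductSpace 𝕜 V]
  {α : Type*} [MeasurableSpace α] {μ : Measure α}

lemma norm_integral_inner_comm (f g : α → V) :
    ‖∫ y, inner 𝕜 (f y) (g y) ∂μ‖ = ‖∫ y, inner 𝕜 (g y) (f y) ∂μ‖ := by
  rw [← RCLike.norm_conj (∫ y, inner 𝕜 (g y) (f y) ∂μ), ← integral_conj]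
  simp only [inner_conj_symm]

variable [NormedSpace ℝ V] [PseudoMetricSpace α] {d : ℕ} {A C s t : ℝ} {x z : α} {f g : α → V}

/-- A molecule of width `t` about `x`: a continuous function of vanishing mean which, together
with its difference quotients at scale `t`, decays one order faster than `decay d (d + 1) t x`. -/
structure IsMolecule (μ : Measure α) (d : ℕ) (A t : ℝ) (x : α) (f : α → V) : Prop where
  continuous : Continuous f
  integral_eq_zero : ∫ y, f y ∂μ = 0
  norm_le : ∀ y, ‖f y‖ ≤ A * decay d (d + 2) t x y
  norm_sub_le : ∀ y z,
    ‖f y - f z‖ ≤ A * (dist z y / t) * (decay d (d + 2) t x y + decay d (d + 2) t x z)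

lemma IsMolecule.nonneg (hf : IsMolecule μ d A t x f) (ht : 0 < t) : 0 ≤ A :=
  nonneg_of_mul_nonneg_left ((norm_nonneg _).trans (hf.norm_le x)) (decay_pos d (d + 2) ht x x)

variable [CompactSpace α] [BorelSpace α] [IsFiniteMeasure μ]

lemma norm_integral_inner_le_of_integral_eq_zero [CompleteSpace V] (hf : Continuous f)
    (hg : Continuous g) (hg0 : ∫ y, g y ∂μ = 0) (c : V) :
    ‖∫ y, inner 𝕜 (f y) (g y) ∂μ‖ ≤ ∫ y, ‖f y - c‖ * ‖g y‖ ∂μ := by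
  have sub_const : ∫ y, inner 𝕜 (f y) (g y) ∂μ = ∫ y, inner 𝕜 (f y - c) (g y) ∂μ := by
    simp only [inner_sub_left]
    rw [integral_sub (integrable_of_continuous (hf.inner hg))
      (integrable_of_continuous (continuous_const.inner hg)),
      integral_inner (integrable_of_continuous hg), hg0, inner_zero_right, sub_zero]
  rw [sub_const]
  refine (norm_integral_le_integral_norm _).trans (integral_mono
    (integrable_of_continuous ((hf.sub continuous_const).inner hg).norm)
    (integrable_of_continuous (by fun_prop)) fun y => norm_inner_le_norm _ _)

namespace IsMolecule

section Pairing

variable [CompleteSpace V]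

lemma norm_integral_inner_le (hμ : IsUpperRegular μ d C) (hs : 0 < s) (ht : 0 < t)
    (hf : IsMolecule μ d A t x f) (hg : IsMolecule μ d A s z g) :
    ‖∫ y, inner 𝕜 (f y) (g y) ∂μ‖ ≤ A ^ 2 * (s / t) *
      ((∫ y, decay d (d + 1) s z y * decay d (d + 2) t x y ∂μ) +
        2 ^ (d + 2) * C * decay d (d + 2) t x z) := by
  have hA := hf.nonneg ht
  have hfc := hf.continuous
  have hgc := hg.continuous
  have hs_cont := continuous_decay d (d + 1) hs z
  have ht_cont := continuous_decay d (d + 2) ht x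
  have htz := decay_nonneg d (d + 2) ht x z
  have pointwise_le (y : α) : ‖f y - f z‖ * ‖g y‖ ≤ A ^ 2 * (s / t) *
      (decay d (d + 1) s z y * decay d (d + 2) t x y +
        decay d (d + 1) s z y * decay d (d + 2) t x z) := by
    have hty := decay_nonneg d (d + 2) ht x y
    calc ‖f y - f z‖ * ‖g y‖
        ≤ (A * (dist z y / t) * (decay d (d + 2) t x y + decay d (d + 2) t x z)) *
          (A * decay d (d + 2) s z y) :=
          mul_le_mul (hf.norm_sub_le y z) (hg.norm_le y) (norm_nonneg _) (by positivity)
      _ = A ^ 2 * (s / t) * ((dist z y / s * decay d (d + 2) s z y) *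
            (decay d (d + 2) t x y + decay d (d + 2) t x z)) := by field_simp
      _ ≤ A ^ 2 * (s / t) * (decay d (d + 1) s z y *
            (decay d (d + 2) t x y + decay d (d + 2) t x z)) := by
          gcongr
          exact dist_div_mul_decay_succ_le d (d + 1) hs z y
      _ = _ := by ring
  refine (norm_integral_inner_le_of_integral_eq_zero hfc hgc hg.integral_eq_zero (f z)).trans <|
    (integral_mono (integrable_of_continuous (by fun_prop))
      (integrable_of_continuous (by fun_prop)) pointwise_le).trans ?_
  rw [integral_const_mul, integral_add (integrable_of_continuous (by fun_prop))
    (integrable_of_continuous (by fun_prop)), integral_mul_const]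
  gcongr
  exact hμ.integral_decay_le hs z

lemma norm_integral_inner_le_of_lipschitzWith (hμ : IsUpperRegular μ d C) (hd : d ≠ 0)
    (ht : 0 < t) (hf : IsMolecule μ d A t x f) {F : α → V} {L : NNReal} (hF : LipschitzWith L F) :
    ‖∫ y, inner 𝕜 (f y) (F y) ∂μ‖ ≤
      L * A * (2 ^ (d + 2) * C + diam (Set.univ : Set α) * μ.real Set.univ) * min t t⁻¹ := by
  have hfc := hf.continuous
  have hFc := hF.continuous
  have hcont := continuous_decay d (d + 2) ht x
  have pointwise_le (y : α) :
      ‖F y - F x‖ * ‖f y‖ ≤ L * A * (dist x y * decay d (d + 2) t x y) := by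
    calc ‖F y - F x‖ * ‖f y‖ ≤ (L * dist x y) * (A * decay d (d + 2) t x y) :=
          mul_le_mul (by rw [← dist_eq_norm, dist_comm x]; exact hF.dist_le_mul y x)
            (hf.norm_le y) (norm_nonneg _) (by positivity)
      _ = _ := by ring
  rw [norm_integral_inner_comm]
  refine (norm_integral_inner_le_of_integral_eq_zero hFc hfc hf.integral_eq_zero (F x)).trans <|
    (integral_mono (integrable_of_continuous (by fun_prop))
      (integrable_of_continuous (by fun_prop)) pointwise_le).trans ?_
  rw [integral_const_mul, mul_assoc _ _ (min t t⁻¹)]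
  exact mul_le_mul_of_nonneg_left (hμ.integral_dist_mul_decay_le hd ht x)
    (mul_nonneg L.coe_nonneg (hf.nonneg ht))

end Pairing

end IsMolecule

end Molecule

section AlmostOrthogonality

variable {α : Type*} [PseudoMetricSpace α] [CompactSpace α] [MeasurableSpace α] [BorelSpace α]
  {μ : Measure α} [IsFiniteMeasure μ]

lemma sum_mul_integral_mul_add_le {κ : Type*} (F : Finset κ) (m : κ → ℝ) {h : κ → α → ℝ}
    {g : α → ℝ} {b : κ → ℝ} {K K' : ℝ} (hh : ∀ k, Continuous (h k)) (hg : Continuous g)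
    (hg0 : ∀ y, 0 ≤ g y) (hgK : ∫ y, g y ∂μ ≤ K) (hK' : 0 ≤ K')
    (hhK' : ∀ y, ∑ k ∈ F, m k * h k y ≤ K') (hbK' : ∑ k ∈ F, m k * b k ≤ K') :
    ∑ k ∈ F, m k * ((∫ y, g y * h k y ∂μ) + K * b k) ≤ 2 * K * K' := by
  have hK : 0 ≤ K := (integral_nonneg hg0).trans hgK
  have sum_integral_le : ∑ k ∈ F, m k * ∫ y, g y * h k y ∂μ ≤ K * K' := by
    calc ∑ k ∈ F, m k * ∫ y, g y * h k y ∂μ = ∫ y, g y * ∑ k ∈ F, m k * h k y ∂μ := by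
          simp only [← integral_const_mul, Finset.mul_sum, mul_left_comm (m _)]
          exact (integral_finsetSum _ fun k _ =>
            integrable_of_continuous (hg.mul (continuous_const.mul (hh k)))).symm
      _ ≤ ∫ y, g y * K' ∂μ :=
          integral_mono (integrable_of_continuous (by fun_prop))
            (integrable_of_continuous (by fun_prop))
            fun y => mul_le_mul_of_nonneg_left (hhK' y) (hg0 y)
      _ ≤ K * K' := by
          rw [integral_mul_const]
          exact mul_le_mul_of_nonneg_right hgK hK'
  calc ∑ k ∈ F, m k * ((∫ y, g y * h k y ∂μ) + K * b k)
      = ∑ k ∈ F, m k * ∫ y, g y * h k y ∂μ + K * ∑ k ∈ F, m k * b k := by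
        simp only [mul_add, Finset.sum_add_distrib, Finset.mul_sum, mul_left_comm K]
    _ ≤ K * K' + K * K' := add_le_add sum_integral_le (mul_le_mul_of_nonneg_left hbK' hK)
    _ = 2 * K * K' := by ring

variable {𝕜 : Type*} [RCLike 𝕜] {V : Type*} [NormedAddCommGroup V] [InnerProductSpace 𝕜 V]
  [NormedSpace ℝ V] [CompleteSpace V] {d : ℕ} {A C s t : ℝ}

/-- The constant of the almost-orthogonality estimate for molecules of size `A` on an upper
`d`-regular space with constant `C`. -/
def gramConst (d : ℕ) (A C : ℝ) : ℝ :=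
  A ^ 2 * (2 * (2 ^ (d + 2) * C) * (2 ^ (d + 1) * (2 ^ (d + 2) * C)))

lemma gramConst_nonneg (d : ℕ) (A C : ℝ) : 0 ≤ gramConst d A C := by
  rw [gramConst, show A ^ 2 * (2 * (2 ^ (d + 2) * C) * (2 ^ (d + 1) * (2 ^ (d + 2) * C))) =
    2 * 2 ^ (d + 2) * 2 ^ (d + 1) * 2 ^ (d + 2) * (A * C) ^ 2 by ring]
  positivity

variable {κ : Type*} {E : κ → Set α} {x : κ → α} {φ : κ → α → V} {z : α} {f : α → V}

lemma sum_measureReal_mul_norm_integral_inner_le_div (hμ : IsUpperRegular μ d C) (hs : 0 < s)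
    (ht : 0 < t) (hE : IsCellFamily t E x)
    (hφ : ∀ k, IsMolecule μ d A t (x k) (φ k)) (hf : IsMolecule μ d A s z f) (F : Finset κ) :
    ∑ k ∈ F, μ.real (E k) * ‖∫ y, inner 𝕜 (f y) (φ k y) ∂μ‖ ≤ gramConst d A C * (s / t) := by
  have hC := hμ.nonneg z
  have gram_le (k : κ) := (norm_integral_inner_comm f (φ k)).trans_le
    ((hφ k).norm_integral_inner_le (𝕜 := 𝕜) hμ hs ht hf)
  calc _ ≤ ∑ k ∈ F, μ.real (E k) * _ :=
        Finset.sum_le_sum fun k _ => mul_le_mul_of_nonneg_left (gram_le k) measureReal_nonneg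
    _ = A ^ 2 * (s / t) * ∑ k ∈ F, μ.real (E k) * _ := by
        simp only [mul_left_comm _ (A ^ 2 * (s / t)), ← Finset.mul_sum]
    _ ≤ A ^ 2 * (s / t) * _ :=
        mul_le_mul_of_nonneg_left (sum_mul_integral_mul_add_le F _
          (fun k => continuous_decay d (d + 2) ht (x k)) (continuous_decay d (d + 1) hs z)
          (decay_nonneg d (d + 1) hs z) (hμ.integral_decay_le hs z) (by positivity)
          (hE.sum_measureReal_mul_decay_succ_le_const hμ ht le_rfl F)
          (hE.sum_measureReal_mul_decay_succ_le_const hμ ht le_rfl F z)) (by positivity)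
    _ = _ := by rw [gramConst, mul_right_comm]

-- The roles are exchanged: now the vanishing means of the narrower molecules `φ k` are used.
lemma sum_measureReal_mul_norm_integral_inner_le_div_of_ge (hμ : IsUpperRegular μ d C) (hs : 0 < s)
    (ht : 0 < t) (hts : t ≤ s) (hE : IsCellFamily t E x)
    (hφ : ∀ k, IsMolecule μ d A t (x k) (φ k)) (hf : IsMolecule μ d A s z f) (F : Finset κ) :
    ∑ k ∈ F, μ.real (E k) * ‖∫ y, inner 𝕜 (f y) (φ k y) ∂μ‖ ≤ gramConst d A C * (t / s) := by
  have hC := hμ.nonneg z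
  have gram_le (k : κ) : ‖∫ y, inner 𝕜 (f y) (φ k y) ∂μ‖ ≤ A ^ 2 * (t / s) *
      ((∫ y, decay d (d + 2) s z y * decay d (d + 1) t (x k) y ∂μ) +
        2 ^ (d + 2) * C * decay d (d + 2) s (x k) z) := by
    simpa only [mul_comm (decay d (d + 1) t _ _), decay_symm d (d + 2) s z (x k)]
      using hf.norm_integral_inner_le (𝕜 := 𝕜) hμ ht hs (hφ k)
  calc _ ≤ ∑ k ∈ F, μ.real (E k) * _ :=
        Finset.sum_le_sum fun k _ => mul_le_mul_of_nonneg_left (gram_le k) measureReal_nonneg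
    _ = A ^ 2 * (t / s) * ∑ k ∈ F, μ.real (E k) * _ := by
        simp only [mul_left_comm _ (A ^ 2 * (t / s)), ← Finset.mul_sum]
    _ ≤ A ^ 2 * (t / s) * _ :=
        mul_le_mul_of_nonneg_left (sum_mul_integral_mul_add_le F _
          (fun k => continuous_decay d (d + 1) ht (x k)) (continuous_decay d (d + 2) hs z)
          (decay_nonneg d (d + 2) hs z) (hμ.integral_decay_succ_le hs z) (by positivity)
          (hE.sum_measureReal_mul_decay_le_const hμ ht le_rfl F)
          (hE.sum_measureReal_mul_decay_succ_le_const hμ hs hts F z)) (by positivity)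
    _ = _ := by rw [gramConst, mul_right_comm]

theorem sum_measureReal_mul_norm_integral_inner_le (hμ : IsUpperRegular μ d C) (hs : 0 < s)
    (ht : 0 < t) (hE : IsCellFamily t E x) (hφ : ∀ k, IsMolecule μ d A t (x k) (φ k))
    (hf : IsMolecule μ d A s z f) (F : Finset κ) :
    ∑ k ∈ F, μ.real (E k) * ‖∫ y, inner 𝕜 (f y) (φ k y) ∂μ‖ ≤
      gramConst d A C * min (s / t) (t / s) := by
  rcases le_total s t with hst | hts
  · rw [min_eq_left (((div_le_one ht).2 hst).trans ((one_le_div hs).2 hst))]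
    exact sum_measureReal_mul_norm_integral_inner_le_div hμ hs ht hE hφ hf F
  · rw [min_eq_right (((div_le_one hs).2 hts).trans ((one_le_div ht).2 hts))]
    exact sum_measureReal_mul_norm_integral_inner_le_div_of_ge hμ hs ht hts hE hφ hf F

end AlmostOrthogonality

section MultiscaleSum

lemma summable_min_zpow {a : ℝ} (ha : 1 < a) : Summable fun l : ℤ => min (a ^ l) (a ^ l)⁻¹ := by
  have : 0 < a := one_pos.trans ha
  have geometric : Summable fun n : ℕ => a⁻¹ ^ n :=
    summable_geometric_of_lt_one (by positivity) (inv_lt_one_of_one_lt₀ ha)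
  refine .of_nat_of_neg (.of_nonneg_of_le (fun n => by positivity) (fun n => ?_) geometric)
    (.of_nonneg_of_le (fun n => by positivity) (fun n => ?_) geometric)
  · exact (min_le_right _ _).trans_eq (by rw [zpow_natCast, inv_pow])
  · exact (min_le_left _ _).trans_eq (by rw [zpow_neg, zpow_natCast, inv_pow])

lemma hasSum_min_zpow_div {a : ℝ} (ha : 1 < a) (j : ℤ) :
    HasSum (fun l : ℤ => min (a ^ j / a ^ l) (a ^ l / a ^ j))
      (∑' l : ℤ, min (a ^ l) (a ^ l)⁻¹) := by
  have ha0 : a ≠ 0 := (one_pos.trans ha).ne'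
  convert (Equiv.subLeft j).hasSum_iff.2 (summable_min_zpow ha).hasSum using 2 with l
  simp only [Function.comp_apply, Equiv.subLeft_apply, zpow_sub₀ ha0, inv_div]

lemma sum_sigma_le_tsum {ι : Type*} {κ : ι → Type*} {f : (Σ i, κ i) → ℝ} {b : ι → ℝ}
    (hb : Summable b) (hfb : ∀ i (F : Finset (κ i)), ∑ k ∈ F, f ⟨i, k⟩ ≤ b i)
    (s : Finset (Σ i, κ i)) : ∑ p ∈ s, f p ≤ ∑' i, b i := by
  classical
  have hb0 (i : ι) : 0 ≤ b i := by simpa using hfb i ∅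
  rw [← Finset.sigma_image_fst_preimage_mk s, Finset.sum_sigma]
  exact (Finset.sum_le_sum fun i _ => hfb i _).trans (hb.sum_le_tsum _ fun i _ => hb0 i)

end MultiscaleSum

section LpSum

variable {α : Type*} [MeasurableSpace α] {μ : Measure α} {V : Type*} [NormedAddCommGroup V]

section

variable {𝕜 : Type*} [RCLike 𝕜] [InnerProductSpace 𝕜 V]

lemma inner_toLp {f : α → V} (hf : MemLp f 2 μ) (F : Lp V 2 μ) :
    inner 𝕜 (hf.toLp f) F = ∫ y, inner 𝕜 (f y) (F y) ∂μ := by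
  rw [L2.inner_def]
  refine integral_congr_ae ?_
  filter_upwards [hf.coeFn_toLp] with y hy
  rw [hy]

lemma inner_toLp_toLp {f g : α → V} (hf : MemLp f 2 μ) (hg : MemLp g 2 μ) :
    inner 𝕜 (hf.toLp f) (hg.toLp g) = ∫ y, inner 𝕜 (f y) (g y) ∂μ := by
  rw [inner_toLp]
  refine integral_congr_ae ?_
  filter_upwards [hg.coeFn_toLp] with y hy
  rw [hy]

end

lemma ae_eq_tsum_of_hasSum_toLp {𝕜 P : Type*} [NormedField 𝕜] [NormedSpace 𝕜 V] [Countable P]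
    {q : ENNReal} [Fact (1 ≤ q)] {c : P → 𝕜} {g : P → α → V} (hg : ∀ p, MemLp (g p) q μ)
    {T : Lp V q μ} (hT : HasSum (fun p => c p • (hg p).toLp (g p)) T)
    (hs : ∀ z, Summable fun p => c p • g p z) : T =ᵐ[μ] fun z => ∑' p, c p • g p z := by
  obtain ⟨s, tendsto_s, tendsto_ae⟩ := (tendstoInMeasure_of_tendsto_Lp hT).exists_seq_tendsto_ae'
  have partialSum_ae : ∀ᵐ z ∂μ, ∀ i,
      (∑ p ∈ s i, c p • (hg p).toLp (g p) : Lp V q μ) z = ∑ p ∈ s i, c p • g p z := by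
    have term_ae : ∀ᵐ z ∂μ, ∀ p, (c p • (hg p).toLp (g p) : Lp V q μ) z = c p • g p z :=
      ae_all_iff.2 fun p => by
        filter_upwards [Lp.coeFn_smul (c p) ((hg p).toLp (g p)), (hg p).coeFn_toLp] with z h h'
        rw [h, Pi.smul_apply, h']
    refine ae_all_iff.2 fun i => ?_
    filter_upwards [term_ae, Lp.coeFn_finsetSum (s i) fun p => c p • (hg p).toLp (g p)]
      with z hz h
    simp only [h, Finset.sum_apply, hz]
  filter_upwards [tendsto_ae, partialSum_ae] with z hz hz'
  refine tendsto_nhds_unique hz ?_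
  simpa only [hz', Function.comp_def] using (hs z).hasSum.comp tendsto_s

end LpSum

section MoleculeExpansion

variable {𝕜 : Type*} [RCLike 𝕜] {V : Type*} [NormedAddCommGroup V] [InnerProductSpace 𝕜 V]
  [NormedSpace ℝ V] [CompleteSpace V] {W : Type*} [NormedAddCommGroup W] [InnerProductSpace 𝕜 W]
  [NormedSpace ℝ W] [CompleteSpace W]
  {α : Type*} [PseudoMetricSpace α] [CompactSpace α] [MeasurableSpace α] [BorelSpace α]
  {μ : Measure α} [IsFiniteMeasure μ] {d : ℕ} {A C a : ℝ}
  {κ : ℤ → Type*} {E : (j : ℤ) → κ j → Set α} {x : (j : ℤ) → κ j → α}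
  {φ : (j : ℤ) → κ j → α → V} {ψ : (j : ℤ) → κ j → α → W}

variable (𝕜) in
theorem isBesselFamily_toLp (hμ : IsUpperRegular μ d C) (ha : 1 < a)
    (hE : ∀ j, IsCellFamily (a ^ j) (E j) (x j))
    (hφ : ∀ j k, IsMolecule μ d A (a ^ j) (x j k) (φ j k)) (hm : ∀ j k, MemLp (φ j k) 2 μ) :
    IsBesselFamily 𝕜
      (fun p : Σ j, κ j => (√(μ.real (E p.1 p.2)) : 𝕜) • (hm p.1 p.2).toLp (φ p.1 p.2))
      (gramConst d A C * ∑' l : ℤ, min (a ^ l) (a ^ l)⁻¹) := by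
  have ha0 (j : ℤ) : 0 < a ^ j := zpow_pos (one_pos.trans ha) j
  refine .of_row_sum_le (fun _ => measureReal_nonneg) (mul_nonneg (gramConst_nonneg d A C)
    (tsum_nonneg fun l => le_min (ha0 l).le (inv_nonneg.2 (ha0 l).le))) fun s p => ?_
  have hasSum_levels := (hasSum_min_zpow_div ha p.1).mul_left (gramConst d A C)
  rw [← hasSum_levels.tsum_eq]
  refine sum_sigma_le_tsum hasSum_levels.summable (fun l F => ?_) s
  simp only [inner_toLp_toLp]
  exact sum_measureReal_mul_norm_integral_inner_le hμ (ha0 _) (ha0 l) (hE l) (hφ l) (hφ _ _) F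

variable (𝕜) in
lemma summable_integral_inner_smul (hμ : IsUpperRegular μ d C) (hd : d ≠ 0) (ha : 1 < a)
    (hE : ∀ j, IsCellFamily (a ^ j) (E j) (x j))
    (hφ : ∀ j k, IsMolecule μ d A (a ^ j) (x j k) (φ j k))
    (hψ : ∀ j k, IsMolecule μ d A (a ^ j) (x j k) (ψ j k))
    {F : α → V} {L : NNReal} (hF : LipschitzWith L F) (z : α) :
    Summable fun p : Σ j, κ j =>
      ((μ.real (E p.1 p.2) : 𝕜) * ∫ y, inner 𝕜 (φ p.1 p.2 y) (F y) ∂μ) • ψ p.1 p.2 z := by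
  have ha0 (j : ℤ) : 0 < a ^ j := zpow_pos (one_pos.trans ha) j
  have hC := hμ.nonneg z
  set K := L * A * (2 ^ (d + 2) * C + diam (Set.univ : Set α) * μ.real Set.univ) * A with hK
  have hK0 : 0 ≤ K := by
    rw [hK, mul_right_comm, mul_assoc (L : ℝ)]
    have := mul_self_nonneg A
    positivity
  have term_le (l : ℤ) (k : κ l) :
      ‖((μ.real (E l k) : 𝕜) * ∫ y, inner 𝕜 (φ l k y) (F y) ∂μ) • ψ l k z‖ ≤
        K * min (a ^ l) (a ^ l)⁻¹ * (μ.real (E l k) * decay d (d + 2) (a ^ l) (x l k) z) := by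
    have pairing_le := (hφ l k).norm_integral_inner_le_of_lipschitzWith (𝕜 := 𝕜) hμ hd (ha0 l) hF
    rw [norm_smul, norm_mul, RCLike.norm_ofReal, abs_of_nonneg measureReal_nonneg]
    exact (mul_le_mul (mul_le_mul_of_nonneg_left pairing_le measureReal_nonneg)
      ((hψ l k).norm_le z) (norm_nonneg _)
      (mul_nonneg measureReal_nonneg ((norm_nonneg _).trans pairing_le))).trans_eq (by ring)
  refine .of_norm <| summable_of_sum_le (fun _ => norm_nonneg _) <|
    sum_sigma_le_tsum ((summable_min_zpow ha).mul_left (K * (2 ^ (d + 1) * (2 ^ (d + 2) * C))))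
      fun l s => ?_
  have hl := ha0 l
  calc _ ≤ ∑ k ∈ s, K * min (a ^ l) (a ^ l)⁻¹ * _ := Finset.sum_le_sum fun k _ => term_le l k
    _ = K * min (a ^ l) (a ^ l)⁻¹ * ∑ k ∈ s, _ := (Finset.mul_sum ..).symm
    _ ≤ K * min (a ^ l) (a ^ l)⁻¹ * _ :=
        mul_le_mul_of_nonneg_left
          ((hE l).sum_measureReal_mul_decay_succ_le_const hμ hl le_rfl s z) (by positivity)
    _ = _ := mul_right_comm ..

variable (𝕜) in
theorem summable_norm_inner_toLp_mul_inner_toLp (hμ : IsUpperRegular μ d C) (ha : 1 < a)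
    (hE : ∀ j, IsCellFamily (a ^ j) (E j) (x j))
    (hφ : ∀ j k, IsMolecule μ d A (a ^ j) (x j k) (φ j k))
    (hψ : ∀ j k, IsMolecule μ d A (a ^ j) (x j k) (ψ j k))
    (hmφ : ∀ j k, MemLp (φ j k) 2 μ) (hmψ : ∀ j k, MemLp (ψ j k) 2 μ)
    (F : Lp V 2 μ) (G : Lp W 2 μ) :
    Summable fun p : Σ j, κ j => ‖(μ.real (E p.1 p.2) : 𝕜) *
      inner 𝕜 ((hmφ p.1 p.2).toLp (φ p.1 p.2)) F * inner 𝕜 G ((hmψ p.1 p.2).toLp (ψ p.1 p.2))‖ := by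
  simpa only [inner_sqrt_smul_mul_inner_sqrt_smul measureReal_nonneg] using
    (isBesselFamily_toLp 𝕜 hμ ha hE hφ hmφ).summable_norm_inner_mul_inner
      (isBesselFamily_toLp 𝕜 hμ ha hE hψ hmψ) F G

theorem hasSum_inner_toLp_smul_toLp [∀ j, Countable (κ j)] (hμ : IsUpperRegular μ d C)
    (hd : d ≠ 0) (ha : 1 < a) (hE : ∀ j, IsCellFamily (a ^ j) (E j) (x j))
    (hφ : ∀ j k, IsMolecule μ d A (a ^ j) (x j k) (φ j k))
    (hψ : ∀ j k, IsMolecule μ d A (a ^ j) (x j k) (ψ j k))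
    (hmφ : ∀ j k, MemLp (φ j k) 2 μ) (hmψ : ∀ j k, MemLp (ψ j k) 2 μ)
    {Y : Type*} {f : Y → α → V} (hmf : ∀ i, MemLp (f i) 2 μ)
    (hdense : DenseRange fun i => (hmf i).toLp (f i)) (hlip : ∀ i, ∃ L, LipschitzWith L (f i))
    (S : Lp V 2 μ →L[𝕜] Lp W 2 μ)
    (hS : ∀ i, S ((hmf i).toLp (f i)) =ᵐ[μ] fun z => ∑' p : Σ j, κ j,
      ((μ.real (E p.1 p.2) : 𝕜) * ∫ y, inner 𝕜 (φ p.1 p.2 y) (f i y) ∂μ) • ψ p.1 p.2 z)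
    (F : Lp V 2 μ) :
    HasSum (fun p : Σ j, κ j => ((μ.real (E p.1 p.2) : 𝕜) *
      inner 𝕜 ((hmφ p.1 p.2).toLp (φ p.1 p.2)) F) • (hmψ p.1 p.2).toLp (ψ p.1 p.2)) (S F) := by
  have hv := isBesselFamily_toLp 𝕜 hμ ha hE hφ hmφ
  have hw := isBesselFamily_toLp 𝕜 hμ ha hE hψ hmψ
  suffices hasSum_f : ∀ i, HasSum (fun p : Σ j, κ j => ((μ.real (E p.1 p.2) : 𝕜) *
      inner 𝕜 ((hmφ p.1 p.2).toLp (φ p.1 p.2)) ((hmf i).toLp (f i))) •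
        (hmψ p.1 p.2).toLp (ψ p.1 p.2)) (S ((hmf i).toLp (f i))) by
    simpa only [inner_sqrt_smul_smul_sqrt_smul measureReal_nonneg] using
      hv.hasSum_of_denseRange hdense hw S
        (by simpa only [inner_sqrt_smul_smul_sqrt_smul measureReal_nonneg] using hasSum_f) F
  intro i
  obtain ⟨L, hL⟩ := hlip i
  have summable_Lp := hw.summable_smul (hv.summable_norm_inner_sq ((hmf i).toLp (f i)))
  simp only [inner_sqrt_smul_smul_sqrt_smul measureReal_nonneg] at summable_Lp
  convert summable_Lp.hasSum
  refine Lp.ext ((hS i).trans ?_)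
  have tsum_ae := ae_eq_tsum_of_hasSum_toLp (fun p : Σ j, κ j => hmψ p.1 p.2) summable_Lp.hasSum
  simp only [inner_toLp_toLp] at tsum_ae ⊢
  exact (tsum_ae (summable_integral_inner_smul 𝕜 hμ hd ha hE hφ hψ hL)).symm

end MoleculeExpansion

section SphereMeasure

lemma ofReal_le_volumeIoiPow_Ioo (n : ℕ) {r : ℝ} :
    ENNReal.ofReal r ≤ Measure.volumeIoiPow n (Subtype.val ⁻¹' Set.Ioo 1 (1 + r)) := by
  have subset_Ioi : Set.Ioo 1 (1 + r) ⊆ Set.Ioi (0 : ℝ) := fun l hl => one_pos.trans hl.1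
  have one_le (l : Set.Ioi (0 : ℝ)) (hl : l ∈ Subtype.val ⁻¹' Set.Ioo 1 (1 + r)) :
      1 ≤ ENNReal.ofReal (l.1 ^ n) :=
    ENNReal.one_le_ofReal.2 (one_le_pow₀ hl.1.le)
  have hmeas := (measurableSet_Ioo (a := 1) (b := 1 + r)).preimage
    (measurable_subtype_coe (p := (· ∈ Set.Ioi (0 : ℝ))))
  calc ENNReal.ofReal r
      = (volume.comap Subtype.val) (Subtype.val ⁻¹' Set.Ioo 1 (1 + r) : Set (Set.Ioi (0 : ℝ))) := by
        rw [comap_subtype_coe_apply measurableSet_Ioi, Subtype.image_preimage_coe,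
          Set.inter_eq_right.2 subset_Ioi, Real.volume_Ioo, add_sub_cancel_left]
    _ ≤ _ := by
        rw [Measure.volumeIoiPow, withDensity_apply _ hmeas, ← setLIntegral_one]
        exact setLIntegral_mono' hmeas one_le

variable {V : Type*} [NormedAddCommGroup V] [NormedSpace ℝ V]

lemma image_preimage_homeomorphUnitSphereProd_subset_ball (x : sphere (0 : V) 1) (r : ℝ) :
    Subtype.val '' (homeomorphUnitSphereProd V ⁻¹' ball x r ×ˢ (Subtype.val ⁻¹' Set.Ioo 1 (1 + r)))
      ⊆ ball (x : V) (2 * r) := by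
  rintro _ ⟨y, ⟨hyx, hy1, hyr⟩, rfl⟩
  simp only [homeomorphUnitSphereProd_apply_snd_coe] at hy1 hyr
  rw [mem_ball, Subtype.dist_eq, homeomorphUnitSphereProd_apply_fst_coe] at hyx
  have radial_dist : dist (y : V) (‖(y : V)‖⁻¹ • (y : V)) = ‖(y : V)‖ - 1 := by
    have hy0 : ‖(y : V)‖ ≠ 0 := norm_ne_zero_iff.2 y.2
    have factor : (y : V) - ‖(y : V)‖⁻¹ • (y : V) = (1 - ‖(y : V)‖⁻¹) • (y : V) := by module
    rw [dist_eq_norm, factor, norm_smul, Real.norm_of_nonneg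
      (sub_nonneg.2 (inv_le_one_of_one_le₀ hy1.le)), sub_mul, one_mul, inv_mul_cancel₀ hy0]
  calc dist (y : V) x ≤ dist (y : V) (‖(y : V)‖⁻¹ • (y : V)) + dist (‖(y : V)‖⁻¹ • (y : V)) x :=
        dist_triangle _ _ _
    _ < r + r := by rw [radial_dist]; linarith
    _ = 2 * r := (two_mul r).symm

theorem isUpperRegular_toSphere [FiniteDimensional ℝ V] [MeasurableSpace V] [BorelSpace V]
    (μ : Measure V) [μ.IsAddHaarMeasure] {d : ℕ} (hd : Module.finrank ℝ V = d + 1) :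
    IsUpperRegular μ.toSphere d (2 ^ (d + 1) * μ.real (ball 0 1)) := by
  intro x r hr
  -- The shell `1 < ‖y‖ < 1 + r` over the cap `ball x r` lies in the Euclidean ball of radius `2 r`.
  have measure_sector_le : μ.toSphere (ball x r) * ENNReal.ofReal r ≤ μ (ball (x : V) (2 * r)) := by
    calc _ ≤ μ.toSphere (ball x r) *
          Measure.volumeIoiPow (Module.finrank ℝ V - 1) (Subtype.val ⁻¹' Set.Ioo 1 (1 + r)) := by
          gcongr; exact ofReal_le_volumeIoiPow_Ioo _
      _ = μ (Subtype.val '' (homeomorphUnitSphereProd V ⁻¹'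
            ball x r ×ˢ (Subtype.val ⁻¹' Set.Ioo 1 (1 + r)))) := by
          rw [← Measure.prod_prod,
            ← μ.measurePreserving_homeomorphUnitSphereProd.measure_preimage_emb
              (Homeomorph.measurableEmbedding _),
            comap_subtype_coe_apply (measurableSet_singleton _).compl]
      _ ≤ _ := measure_mono (image_preimage_homeomorphUnitSphereProd_subset_ball x r)
  have measureReal_sector_le : μ.toSphere.real (ball x r) * r ≤ μ.real (ball (x : V) (2 * r)) := by
    simpa [Measure.real, hr.le] using ENNReal.toReal_mono measure_ball_lt_top.ne measure_sector_le
  have scale : μ.real (ball (x : V) (2 * r)) = 2 ^ (d + 1) * μ.real (ball 0 1) * r ^ d * r := by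
    rw [Measure.real, μ.addHaar_ball_of_pos _ (by positivity), hd, ENNReal.toReal_mul,
      ENNReal.toReal_ofReal (by positivity), Measure.real]
    ring
  exact le_of_mul_le_mul_right (measureReal_sector_le.trans_eq scale) hr

end SphereMeasure

section SphereGeometry

open InnerProductGeometry

variable {V : Type*} [NormedAddCommGroup V] [InnerProductSpace ℝ V]

lemma dist_sq_eq_two_sub_two_mul_cos_angle (x y : sphere (0 : V) 1) :
    dist x y ^ 2 = 2 - 2 * Real.cos (angle (x : V) y) := by
  have := norm_sub_sq_eq_norm_sq_add_norm_sq_sub_two_mul_norm_mul_norm_mul_cos_angle (x : V) y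
  simp only [norm_eq_of_mem_sphere] at this
  rw [Subtype.dist_eq, dist_eq_norm]
  linarith

lemma dist_le_angle (x y : sphere (0 : V) 1) : dist x y ≤ angle (x : V) y := by
  refine le_of_sq_le_sq ?_ (angle_nonneg _ _)
  rw [dist_sq_eq_two_sub_two_mul_cos_angle]
  linarith [Real.one_sub_sq_div_two_le_cos (x := angle (x : V) y)]

lemma angle_le_two_mul_dist (x y : sphere (0 : V) 1) : angle (x : V) y ≤ 2 * dist x y := by
  set θ := angle (x : V) y
  have cos_le : Real.cos θ ≤ 1 - 2 / Real.pi ^ 2 * θ ^ 2 :=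
    Real.cos_le_one_sub_mul_cos_sq (by
      rw [abs_of_nonneg (angle_nonneg _ _)]; exact angle_le_pi _ _)
  have one_div_eight_le : 1 / 8 ≤ 2 / Real.pi ^ 2 := by
    rw [div_le_div_iff₀ (by norm_num) (by positivity)]
    nlinarith [Real.pi_le_four, Real.pi_pos]
  refine le_of_sq_le_sq ?_ (by positivity)
  rw [mul_pow, dist_sq_eq_two_sub_two_mul_cos_angle]
  linarith [mul_le_mul_of_nonneg_right one_div_eight_le (sq_nonneg θ)]

lemma exists_norm_eq_one_eq_norm_smul {W : Type*} [NormedAddCommGroup W] [NormedSpace ℝ W]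
    [Nontrivial W] (w : W) : ∃ e : W, ‖e‖ = 1 ∧ w = ‖w‖ • e := by
  rcases eq_or_ne w 0 with rfl | hw
  · obtain ⟨e, he⟩ := exists_norm_eq W zero_le_one
    exact ⟨e, he, by simp⟩
  · exact ⟨‖w‖⁻¹ • w, norm_smul_inv_norm hw, (smul_inv_smul₀ (norm_ne_zero_iff.2 hw) w).symm⟩

lemma exists_eq_cos_angle_smul_add_sin_angle_smul {n : ℕ} [NeZero n]
    [hn : Fact (Module.finrank ℝ V = n + 1)] (x y : sphere (0 : V) 1) :
    ∃ e : V, ‖e‖ = 1 ∧ ⟪(x : V), e⟫ = 0 ∧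
      (y : V) = Real.cos (angle (x : V) y) • (x : V) + Real.sin (angle (x : V) y) • e := by
  set θ := angle (x : V) y
  have cos_eq : Real.cos θ = ⟪(x : V), (y : V)⟫ := by simp [θ, cos_angle]
  set w : V := y - Real.cos θ • (x : V)
  have hxw : ⟪(x : V), w⟫ = 0 := by simp [w, inner_sub_right, inner_smul_right, cos_eq]
  have norm_w : ‖w‖ = Real.sin θ := by
    refine (sq_eq_sq₀ (norm_nonneg _) (sin_angle_nonneg _ _)).1 ?_
    rw [norm_sub_sq_real, norm_smul, norm_eq_of_mem_sphere, norm_eq_of_mem_sphere,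
      inner_smul_right, real_inner_comm, ← cos_eq, Real.sin_sq, mul_one, Real.norm_eq_abs, sq_abs]
    ring
  have : Nontrivial (ℝ ∙ (x : V))ᗮ := by
    refine Module.nontrivial_of_finrank_pos (R := ℝ) ?_
    rw [Submodule.finrank_orthogonal_span_singleton (n := n) (ne_zero_of_mem_unit_sphere x)]
    exact Nat.pos_of_neZero n
  obtain ⟨e, he, hwe⟩ := exists_norm_eq_one_eq_norm_smul
    (⟨w, Submodule.mem_orthogonal_singleton_iff_inner_right.2 hxw⟩ : (ℝ ∙ (x : V))ᗮ)
  refine ⟨e, he, Submodule.mem_orthogonal_singleton_iff_inner_right.1 e.2, ?_⟩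
  have hwe' : w = ‖w‖ • (e : V) := congrArg Subtype.val hwe
  rw [← norm_w, ← hwe']
  exact (add_sub_cancel _ _).symm

lemma norm_smul_add_smul_sq {x e : V} (hx : ‖x‖ = 1) (he : ‖e‖ = 1) (hxe : ⟪x, e⟫ = 0) (p q : ℝ) :
    ‖p • x + q • e‖ ^ 2 = p ^ 2 + q ^ 2 := by
  rw [norm_add_sq_real, norm_smul, norm_smul, hx, he, real_inner_smul_left, inner_smul_right, hxe]
  simp

end SphereGeometry

section SphereMeanValue

open InnerProductGeometry

lemma hasDerivAt_comp_mvfderiv {E H M W : Type*} [NormedAddCommGroup E] [NormedSpace ℝ E]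
    [TopologicalSpace H] {I : ModelWithCorners ℝ E H} [TopologicalSpace M] [ChartedSpace H M]
    [NormedAddCommGroup W] [NormedSpace ℝ W] {γ : ℝ → M} {f : M → W} {s : ℝ}
    (hf : MDifferentiableAt I 𝓘(ℝ, W) f (γ s)) (hγ : MDifferentiableAt 𝓘(ℝ, ℝ) I γ s) :
    HasDerivAt (f ∘ γ) (mvfderiv I f (γ s) (mfderiv 𝓘(ℝ, ℝ) I γ s (1 : ℝ))) s := by
  have hfγ : HasFDerivAt (f ∘ γ) ((mvfderiv I f (γ s)).comp (mfderiv 𝓘(ℝ, ℝ) I γ s)) s :=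
    hasMFDerivAt_iff_hasFDerivAt.1 (hf.hasMFDerivAt.comp s hγ.hasMFDerivAt)
  exact hfγ.hasDerivAt

variable {V : Type*} [NormedAddCommGroup V] [InnerProductSpace ℝ V] {n : ℕ} [NeZero n]
  [Fact (Module.finrank ℝ V = n + 1)]

lemma exists_unit_speed_great_circle (x y : sphere (0 : V) 1) :
    ∃ γ : ℝ → sphere (0 : V) 1, MDifferentiable 𝓘(ℝ, ℝ) (𝓡 n) γ ∧
      (∀ s, ‖mvfderiv (𝓡 n) ((↑) : sphere (0 : V) 1 → V) (γ s)
        (mfderiv 𝓘(ℝ, ℝ) (𝓡 n) γ s (1 : ℝ))‖ = 1) ∧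
      (∀ s, 0 ≤ s → dist (γ s) x ≤ s) ∧ γ 0 = x ∧ γ (angle (x : V) y) = y := by
  obtain ⟨e, he, hxe, hy⟩ := exists_eq_cos_angle_smul_add_sin_angle_smul (n := n) x y
  have norm_sq := norm_smul_add_smul_sq (norm_eq_of_mem_sphere x) he hxe
  let g : ℝ → V := fun s => Real.cos s • (x : V) + Real.sin s • e
  have g_mem (s) : g s ∈ sphere (0 : V) 1 := by
    rw [mem_sphere_zero_iff_norm, ← pow_left_inj₀ (norm_nonneg _) zero_le_one two_ne_zero, norm_sq,
      Real.cos_sq_add_sin_sq, one_pow]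
  have hg (s) : HasDerivAt g (-Real.sin s • (x : V) + Real.cos s • e) s :=
    ((Real.hasDerivAt_cos s).smul_const _).add ((Real.hasDerivAt_sin s).smul_const _)
  have g_contDiff : ContDiff ℝ 1 g :=
    (Real.contDiff_cos.smul contDiff_const).add (Real.contDiff_sin.smul contDiff_const)
  have hγ : MDifferentiable 𝓘(ℝ, ℝ) (𝓡 n) (Set.codRestrict g (sphere (0 : V) 1) g_mem) :=
    (g_contDiff.contMDiff.codRestrict_sphere g_mem).mdifferentiable one_ne_zero
  refine ⟨_, hγ, fun s => ?_, fun s hs => ?_, Subtype.ext (by simp [g]), Subtype.ext hy.symm⟩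
  · rw [(hasDerivAt_comp_mvfderiv (contMDiff_coe_sphere.mdifferentiableAt one_ne_zero)
      (hγ s)).unique (hg s), ← pow_left_inj₀ (norm_nonneg _) zero_le_one two_ne_zero, norm_sq,
      neg_sq, Real.sin_sq_add_cos_sq, one_pow]
  · have chord : g s - x = (Real.cos s - 1) • (x : V) + Real.sin s • e := by
      simp only [g]
      module
    refine le_of_sq_le_sq ?_ hs
    rw [Subtype.dist_eq, Set.val_codRestrict_apply, dist_eq_norm, chord, norm_sq]
    linarith [Real.one_sub_sq_div_two_le_cos (x := s), Real.sin_sq_add_cos_sq s]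

theorem norm_sub_le_mul_angle_of_norm_mvfderiv_le {W : Type*} [NormedAddCommGroup W]
    [NormedSpace ℝ W] {f : sphere (0 : V) 1 → W} (hf : MDifferentiable (𝓡 n) 𝓘(ℝ, W) f)
    {x y : sphere (0 : V) 1} {C : ℝ}
    (hC : ∀ z, dist z x ≤ angle (x : V) y → ∀ u : TangentSpace (𝓡 n) z,
      ‖mvfderiv (𝓡 n) f z u‖ ≤ C * ‖mvfderiv (𝓡 n) ((↑) : sphere (0 : V) 1 → V) z u‖) :
    ‖f y - f x‖ ≤ C * angle (x : V) y := by
  obtain ⟨γ, hγ, unit_speed, dist_le, γ_zero, γ_angle⟩ :=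
    exists_unit_speed_great_circle (n := n) x y
  have mean_value := (convex_Icc 0 (angle (x : V) y)).norm_image_sub_le_of_norm_hasDerivWithin_le
    (fun s _ => (hasDerivAt_comp_mvfderiv (hf (γ s)) (hγ s)).hasDerivWithinAt)
    (fun s hs => (hC _ ((dist_le s hs.1).trans hs.2) _).trans_eq (by rw [unit_speed, mul_one]))
    (Set.left_mem_Icc.2 (angle_nonneg _ _)) (Set.right_mem_Icc.2 (angle_nonneg _ _))
  simpa [γ_zero, γ_angle, Real.norm_of_nonneg (angle_nonneg (x : V) y)] using mean_value

end SphereMeanValue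

section SphereFrame

lemma continuous_mvfderiv_apply {E H M W : Type*} [NormedAddCommGroup E]
    [NormedSpace ℝ E] [TopologicalSpace H] {I : ModelWithCorners ℝ E H} [TopologicalSpace M]
    [ChartedSpace H M] [IsManifold I 1 M] [NormedAddCommGroup W] [NormedSpace ℝ W] {f : M → W}
    (hf : ContMDiff I 𝓘(ℝ, W) 1 f) {X : (x : M) → TangentSpace I x}
    (hX : Continuous fun x => (⟨x, X x⟩ : TangentBundle I M)) :
    Continuous fun z => mvfderiv I f z (X z) := by
  have tangentMap_continuous : Continuous (tangentMap I 𝓘(ℝ, W) f) :=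
    (hf.contMDiff_tangentMap (m := 0) (by norm_num)).continuous
  exact (contMDiff_snd_tangentBundle_modelSpace W 𝓘(ℝ, W) (n := 0)).continuous.comp
    (tangentMap_continuous.comp hX)

variable {V W ι : Type*} [NormedAddCommGroup V] [InnerProductSpace ℝ V] [NormedAddCommGroup W]
  [NormedSpace ℝ W] {n : ℕ} [Fact (Module.finrank ℝ V = n + 1)]

lemma exists_inner_mvfderiv_subtypeVal_eq {z : sphere (0 : V) 1}
    (ℓ : TangentSpace (𝓡 n) z →ₗ[ℝ] ℝ) :
    ∃ w : V, ⟪(z : V), w⟫ = 0 ∧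
      ∀ u, ⟪w, mvfderiv (𝓡 n) ((↑) : sphere (0 : V) 1 → V) z u⟫ = ℓ u := by
  let e := LinearEquiv.ofInjective
    (mvfderiv (𝓡 n) ((↑) : sphere (0 : V) 1 → V) z).toLinearMap
    (injective_mvfderiv_subtypeVal_sphere z)
  have : FiniteDimensional ℝ V := .of_fact_finrank_eq_succ n
  let w := (InnerProductSpace.toDual ℝ _).symm (ℓ ∘ₗ e.symm.toLinearMap).toContinuousLinearMap
  refine ⟨w, Submodule.mem_orthogonal_singleton_iff_inner_right.1
    ((range_mvfderiv_subtypeVal z).le w.2), fun u => ?_⟩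
  calc ⟪w, e u⟫ = ℓ (e.symm (e u)) := InnerProductSpace.toDual_symm_apply
    _ = ℓ u := by rw [e.symm_apply_apply]

lemma exists_pos_mul_norm_le_sum_abs_inner [Fintype ι]
    {X : ι → (x : sphere (0 : V) 1) → TangentSpace (𝓡 n) x}
    (hX : ∀ i, Continuous fun x => (⟨x, X i x⟩ : TangentBundle (𝓡 n) (sphere (0 : V) 1)))
    (hXspan : ∀ x, Submodule.span ℝ (Set.range fun i => X i x) = ⊤) :
    ∃ m > 0, ∀ (z : sphere (0 : V) 1) (w : V), ⟪(z : V), w⟫ = 0 →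
      m * ‖w‖ ≤ ∑ i, |⟪w, mvfderiv (𝓡 n) ((↑) : sphere (0 : V) 1 → V) z (X i z)⟫| := by
  have : FiniteDimensional ℝ V := .of_fact_finrank_eq_succ n
  let dX (i : ι) (z : sphere (0 : V) 1) : V :=
    mvfderiv (𝓡 n) ((↑) : sphere (0 : V) 1 → V) z (X i z)
  have hdX (i : ι) : Continuous (dX i) :=
    continuous_mvfderiv_apply contMDiff_coe_sphere (hX i)
  let K : Set (sphere (0 : V) 1 × sphere (0 : V) 1) := {p | ⟪(p.1 : V), (p.2 : V)⟫ = 0}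
  -- `K` is the unit tangent bundle of the sphere.
  have hK : IsCompact K := (isClosed_eq (by fun_prop) continuous_const).isCompact
  have sum_pos (p) (hp : p ∈ K) : 0 < ∑ i, |⟪(p.2 : V), dX i p.1⟫| := by
    refine (Finset.sum_nonneg fun i _ => abs_nonneg _).lt_of_ne' fun h => ?_
    have orthogonal (i) : ⟪(p.2 : V), dX i p.1⟫ = 0 := abs_eq_zero.1
      ((Finset.sum_eq_zero_iff_of_nonneg fun i _ => abs_nonneg _).1 h i (Finset.mem_univ i))
    have inner_mvfderiv_eq_zero : innerₗ V (p.2 : V) ∘ₗ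
        (mvfderiv (𝓡 n) ((↑) : sphere (0 : V) 1 → V) p.1).toLinearMap = 0 :=
      LinearMap.ext_on_range (hXspan p.1) orthogonal
    obtain ⟨u, hu⟩ := (range_mvfderiv_subtypeVal (n := n) p.1).ge
      (Submodule.mem_orthogonal_singleton_iff_inner_right.2 hp)
    have inner_self : ⟪(p.2 : V), (p.2 : V)⟫ = 0 :=
      (congrArg (fun v => ⟪(p.2 : V), v⟫) hu).symm.trans
        (LinearMap.congr_fun inner_mvfderiv_eq_zero u)
    exact ne_zero_of_mem_unit_sphere p.2 (inner_self_eq_zero.1 inner_self)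
  obtain ⟨m, hm, hmK⟩ := hK.exists_forall_le' (f := fun p => ∑ i, |⟪(p.2 : V), dX i p.1⟫|)
    (by fun_prop) sum_pos
  refine ⟨m, hm, fun z w hzw => ?_⟩
  rcases eq_or_ne w 0 with rfl | hw
  · simp
  have norm_pos : 0 < ‖w‖ := norm_pos_iff.2 hw
  have normalized := hmK (z, ⟨‖w‖⁻¹ • w, by simp [norm_smul, norm_pos.ne']⟩)
    (by simp [K, inner_smul_right, hzw])
  simp only [real_inner_smul_left, abs_mul, abs_inv, abs_norm, ← Finset.mul_sum] at normalized
  rwa [inv_mul_eq_div, le_div_iff₀ norm_pos] at normalized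

lemma exists_norm_le_mul_norm_mvfderiv_subtypeVal [Finite ι]
    {X : ι → (x : sphere (0 : V) 1) → TangentSpace (𝓡 n) x}
    (hX : ∀ i, Continuous fun x => (⟨x, X i x⟩ : TangentBundle (𝓡 n) (sphere (0 : V) 1)))
    (hXspan : ∀ x, Submodule.span ℝ (Set.range fun i => X i x) = ⊤) :
    ∃ C ≥ 0, ∀ (z : sphere (0 : V) 1) (L : TangentSpace (𝓡 n) z →L[ℝ] W) (M : ℝ),
      (∀ i, ‖L (X i z)‖ ≤ M) →
        ∀ u, ‖L u‖ ≤ C * M * ‖mvfderiv (𝓡 n) ((↑) : sphere (0 : V) 1 → V) z u‖ := by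
  have := Fintype.ofFinite ι
  obtain ⟨m, hm, hmX⟩ := exists_pos_mul_norm_le_sum_abs_inner hX hXspan
  refine ⟨Fintype.card ι / m, by positivity, fun z L M hM u => ?_⟩
  obtain ⟨g, norm_g, g_apply⟩ := exists_dual_vector'' ℝ (L u)
  obtain ⟨w, hzw, hw⟩ := exists_inner_mvfderiv_subtypeVal_eq (g.toLinearMap ∘ₗ L.toLinearMap)
  have norm_w : ‖w‖ ≤ Fintype.card ι / m * M := by
    rw [div_mul_eq_mul_div, le_div_iff₀' hm]
    calc m * ‖w‖ ≤ ∑ i, |⟪w, mvfderiv (𝓡 n) ((↑) : sphere (0 : V) 1 → V) z (X i z)⟫| :=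
          hmX z w hzw
      _ ≤ ∑ _i : ι, M := by
          gcongr with i
          rw [hw]
          exact (g.le_of_opNorm_le norm_g _).trans ((one_mul _).trans_le (hM i))
      _ = Fintype.card ι * M := by simp
  calc ‖L u‖ = ⟪w, mvfderiv (𝓡 n) ((↑) : sphere (0 : V) 1 → V) z u⟫ :=
        g_apply.symm.trans (hw u).symm
    _ ≤ ‖w‖ * _ := real_inner_le_norm _ _
    _ ≤ _ := by gcongr

theorem exists_norm_sub_le_mul_dist_of_frame [NeZero n] [Finite ι]
    {X : ι → (x : sphere (0 : V) 1) → TangentSpace (𝓡 n) x}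
    (hX : ∀ i, Continuous fun x => (⟨x, X i x⟩ : TangentBundle (𝓡 n) (sphere (0 : V) 1)))
    (hXspan : ∀ x, Submodule.span ℝ (Set.range fun i => X i x) = ⊤) :
    ∃ C ≥ 0, ∀ {f : sphere (0 : V) 1 → W}, MDifferentiable (𝓡 n) 𝓘(ℝ, W) f →
      ∀ {x y : sphere (0 : V) 1} {M : ℝ}, 0 ≤ M →
        (∀ z, dist z x ≤ 2 * dist x y → ∀ i, ‖mvfderiv (𝓡 n) f z (X i z)‖ ≤ M) →
          ‖f y - f x‖ ≤ C * M * dist x y := by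
  obtain ⟨C, hC, hCX⟩ := exists_norm_le_mul_norm_mvfderiv_subtypeVal (W := W) hX hXspan
  refine ⟨C * 2, by positivity, fun {f} hf {x y M} hM hfX => ?_⟩
  calc ‖f y - f x‖ ≤ C * M * InnerProductGeometry.angle (x : V) y :=
        norm_sub_le_mul_angle_of_norm_mvfderiv_le hf fun z hz u =>
          hCX z _ M (hfX z (hz.trans (angle_le_two_mul_dist x y))) u
    _ ≤ C * M * (2 * dist x y) := by gcongr; exact angle_le_two_mul_dist x y
    _ = C * 2 * M * dist x y := by ring

theorem exists_lipschitzWith_of_contMDiff [NeZero n] [Finite ι]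
    {X : ι → (x : sphere (0 : V) 1) → TangentSpace (𝓡 n) x}
    (hX : ∀ i, Continuous fun x => (⟨x, X i x⟩ : TangentBundle (𝓡 n) (sphere (0 : V) 1)))
    (hXspan : ∀ x, Submodule.span ℝ (Set.range fun i => X i x) = ⊤)
    {f : sphere (0 : V) 1 → W} (hf : ContMDiff (𝓡 n) 𝓘(ℝ, W) 1 f) :
    ∃ L, LipschitzWith L f := by
  have := Fintype.ofFinite ι
  have : FiniteDimensional ℝ V := .of_fact_finrank_eq_succ n
  obtain ⟨C, hC, hCf⟩ := exists_norm_sub_le_mul_dist_of_frame (W := W) hX hXspan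
  obtain ⟨M, hM⟩ := isCompact_univ.exists_bound_of_continuousOn
    (continuous_pi fun i => continuous_mvfderiv_apply hf (hX i)).continuousOn
  refine ⟨(C * M).toNNReal, LipschitzWith.of_dist_le_mul fun x y => ?_⟩
  have M_nonneg : 0 ≤ M := (norm_nonneg _).trans (hM x trivial)
  rw [Real.coe_toNNReal _ (by positivity), dist_comm, dist_eq_norm]
  exact hCf (hf.mdifferentiable one_ne_zero) M_nonneg fun z _ i =>
    (norm_le_pi_norm _ i).trans (hM z trivial)

end SphereFrame

section SphereMolecule

lemma norm_sub_le_of_half_lt_dist {α W : Type*} [PseudoMetricSpace α] [NormedAddCommGroup W]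
    {d m : ℕ} {t B : ℝ} {x y z : α} {f : α → W} (ht : 0 < t) (hB : 0 ≤ B)
    (hf : ∀ y, ‖f y‖ ≤ B * decay d m t x y) (hzy : t / 2 < dist z y) :
    ‖f y - f z‖ ≤ 2 * B * (dist z y / t) * (decay d m t x y + decay d m t x z) := by
  have one_le : 1 ≤ 2 * (dist z y / t) := by
    rw [← mul_div_assoc, le_div_iff₀ ht]
    linarith
  calc ‖f y - f z‖ ≤ ‖f y‖ + ‖f z‖ := norm_sub_le _ _
    _ ≤ 1 * B * (decay d m t x y + decay d m t x z) := by linarith [hf y, hf z]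
    _ ≤ 2 * (dist z y / t) * B * (decay d m t x y + decay d m t x z) := by
        gcongr
        exact add_nonneg (decay_nonneg d m ht x y) (decay_nonneg d m ht x z)
    _ = _ := by ring

variable {V W ι : Type*} [NormedAddCommGroup V] [InnerProductSpace ℝ V] [MeasurableSpace V]
  [NormedAddCommGroup W] [NormedSpace ℝ W] {n : ℕ} [NeZero n] [Fact (Module.finrank ℝ V = n + 1)]

theorem exists_isMolecule_of_frame [Finite ι]
    {X : ι → (x : sphere (0 : V) 1) → TangentSpace (𝓡 n) x}
    (hX : ∀ i, Continuous fun x => (⟨x, X i x⟩ : TangentBundle (𝓡 n) (sphere (0 : V) 1)))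
    (hXspan : ∀ x, Submodule.span ℝ (Set.range fun i => X i x) = ⊤)
    (μ : Measure (sphere (0 : V) 1)) (B : ℝ) :
    ∃ A, ∀ {t : ℝ}, 0 < t → ∀ {x : sphere (0 : V) 1} {f : sphere (0 : V) 1 → W},
      ContMDiff (𝓡 n) 𝓘(ℝ, W) 1 f → ∫ y, f y ∂μ = 0 →
      (∀ y, ‖f y‖ ≤ B * decay n (n + 2) t x y) →
      (∀ i y, t * ‖mvfderiv (𝓡 n) f y (X i y)‖ ≤ B * decay n (n + 2) t x y) →
        IsMolecule μ n A t x f := by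
  obtain ⟨C, hC, hCX⟩ := exists_norm_sub_le_mul_dist_of_frame (W := W) hX hXspan
  refine ⟨(C * 2 ^ (n + 2) + 2) * B, fun {t} ht {x f} hf hf0 hfB hdfB => ?_⟩
  have decay_nonneg (y) := decay_nonneg n (n + 2) ht x y
  have hB : 0 ≤ B :=
    nonneg_of_mul_nonneg_left ((norm_nonneg _).trans (hfB x)) (decay_pos n (n + 2) ht x x)
  refine ⟨hf.continuous, hf0, fun y => (hfB y).trans ?_, fun y z => ?_⟩
  · gcongr
    · exact decay_nonneg y
    · exact le_mul_of_one_le_left hB (by linarith [show 0 ≤ C * 2 ^ (n + 2) by positivity])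
  rcases le_or_gt (dist z y) (t / 2) with near | far
  · have derivative_le (w) (hw : dist w z ≤ 2 * dist z y) (i) :
        ‖mvfderiv (𝓡 n) f w (X i w)‖ ≤ 2 ^ (n + 2) * B * decay n (n + 2) t x z / t := by
      rw [le_div_iff₀' ht]
      calc _ ≤ B * decay n (n + 2) t w x := (hdfB i w).trans_eq (by rw [decay_symm])
        _ ≤ B * (2 ^ (n + 2) * decay n (n + 2) t z x) := by
            gcongr
            exact decay_le_two_pow_mul_decay ht (by rw [dist_comm]; linarith) x
        _ = _ := by rw [decay_symm]; ring
    calc ‖f y - f z‖ ≤ C * (2 ^ (n + 2) * B * decay n (n + 2) t x z / t) * dist z y :=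
          hCX (hf.mdifferentiable one_ne_zero)
            (div_nonneg (mul_nonneg (by positivity) (decay_nonneg z)) ht.le) derivative_le
      _ = C * 2 ^ (n + 2) * B * (dist z y / t) * decay n (n + 2) t x z := by ring
      _ ≤ _ := by gcongr <;> linarith [decay_nonneg y, decay_nonneg z]
  · calc ‖f y - f z‖
        ≤ 2 * B * (dist z y / t) * (decay n (n + 2) t x y + decay n (n + 2) t x z) :=
          norm_sub_le_of_half_lt_dist ht hB hfB far
      _ ≤ _ := by
          gcongr
          · exact add_nonneg (decay_nonneg y) (decay_nonneg z)
          · exact le_add_of_nonneg_left (by positivity)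

end SphereMolecule

section SmoothDense

variable {E H M W : Type*} [NormedAddCommGroup E] [NormedSpace ℝ E] [FiniteDimensional ℝ E]
  [TopologicalSpace H] (I : ModelWithCorners ℝ E H) [TopologicalSpace M] [ChartedSpace H M]
  [IsManifold I (⊤ : ℕ∞) M] [CompactSpace M] [T2Space M] [NormedAddCommGroup W] [NormedSpace ℝ W]

lemma dense_contMDiff :
    Dense {g : C(M, W) | ContMDiff I 𝓘(ℝ, W) (⊤ : ℕ∞) g} := by
  refine Metric.dense_iff.2 fun f ε hε => ?_
  obtain ⟨g, hgf, -⟩ :=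
    f.continuous.exists_contMDiff_approx I (⊤ : ℕ∞) continuous_const fun _ => hε
  exact ⟨⟨g, g.contMDiff.continuous⟩, (ContinuousMap.dist_lt_iff hε).2 hgf, g.contMDiff⟩

theorem denseRange_toLp_contMDiff [MeasurableSpace M] [BorelSpace M]
    [SecondCountableTopologyEither M W] (μ : Measure M) [IsFiniteMeasure μ] [μ.WeaklyRegular]
    (hm : ∀ f : {f : M → W // ContMDiff I 𝓘(ℝ, W) (⊤ : ℕ∞) f}, MemLp f.1 2 μ) :
    DenseRange fun f => (hm f).toLp f.1 := by
  refine ((ContinuousMap.toLp_denseRange (p := 2) W μ ℝ (by simp)).dense_image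
    (ContinuousLinearMap.continuous _) (dense_contMDiff I)).mono ?_
  rintro _ ⟨g, hg, rfl⟩
  exact ⟨⟨g, hg⟩, Lp.ext ((hm ⟨g, hg⟩).coeFn_toLp.trans (ContinuousMap.coeFn_toLp μ g).symm)⟩

end SmoothDense

section SummationOperator

variable {ι : Type*} {X : ι → (x : Sph) → TangentSpace (𝓡 2) x}

lemma gdist_eq_angle (x y : Sph) : gdist x y = InnerProductGeometry.angle (x : E3) y := by
  simp [gdist, InnerProductGeometry.angle]

lemma dist_le_gdist (x y : Sph) : dist x y ≤ gdist x y :=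
  (dist_le_angle x y).trans_eq (gdist_eq_angle x y).symm

theorem isUpperRegular_sphMeasure : IsUpperRegular sphMeasure 2
    (2 ^ (2 + 1) * volume.real (ball (0 : E3) 1)) :=
  isUpperRegular_toSphere volume Fact.out

lemma isCellFamily_of_gdist_lt {κ : Type*} {t : ℝ} {E : κ → Set Sph} {x : κ → Sph}
    (hE : ∀ k, MeasurableSet (E k)) (hdisj : Pairwise fun k l => Disjoint (E k) (E l))
    (hdiam : ∀ k, ∀ y ∈ E k, ∀ z ∈ E k, gdist y z < t) (hx : ∀ k, x k ∈ E k) :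
    IsCellFamily t E x :=
  ⟨hE, hdisj, fun k y hy => (dist_le_gdist y (x k)).trans (hdiam k y hy (x k) (hx k)).le⟩

lemma norm_mderivApplyS (f : Sph → ℂ) (x : Sph) (v : TangentSpace (𝓡 2) x) :
    ‖mderivApplyS f x v‖ = ‖mvfderiv (𝓡 2) f x v‖ := rfl

theorem exists_isMolecule_of_mem_mClass [Finite ι]
    (hX : ∀ i, Continuous fun x => (⟨x, X i x⟩ : TangentBundle (𝓡 2) Sph))
    (hXspan : ∀ x, Submodule.span ℝ (Set.range fun i => X i x) = ⊤) :
    ∃ A, ∀ {t : ℝ}, 0 < t → ∀ {x f}, f ∈ MClass X x t → IsMolecule sphMeasure 2 A t x f := by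
  obtain ⟨A, hA⟩ := exists_isMolecule_of_frame (W := ℂ) hX hXspan sphMeasure (2 ^ (2 + 2) * 1)
  refine ⟨A, fun {t} ht {x f} ⟨hf, hf0, hfN, hdfN⟩ =>
    hA ht (hf.of_le (by simp)) hf0 (fun y => ?_) fun i y => ?_⟩
  all_goals have dist_div_le : dist x y / t ≤ gdist x y / t := by gcongr; exact dist_le_gdist x y
  · exact le_two_pow_mul_decay_of_mul_pow_le ht (norm_nonneg _) dist_div_le
      (by simpa using hfN y 0 (by simp)) (hfN y 4 le_rfl)
  · have scaled (N) (hN : N ≤ 4) : t ^ 2 * ((gdist x y / t) ^ N *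
        (t * ‖mvfderiv (𝓡 2) f y (X i y)‖)) ≤ 1 :=
      (hdfN i y N hN).trans_eq' (by rw [norm_mderivApplyS]; ring)
    exact le_two_pow_mul_decay_of_mul_pow_le ht (by positivity) dist_div_le
      (by simpa using scaled 0 (by simp)) (scaled 4 le_rfl)

instance : IsFiniteMeasure sphMeasure := inferInstanceAs (IsFiniteMeasure volume.toSphere)

lemma sphInner_eq_integral_inner (F f : Sph → ℂ) :
    sphInner F f = ∫ y, inner ℂ (f y) (F y) ∂sphMeasure := rfl

lemma inner_toLp_eq_sphInner {f : Sph → ℂ} (hf : MemLp f 2 sphMeasure) (F : Lp ℂ 2 sphMeasure) :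
    inner ℂ (hf.toLp f) F = sphInner F f := inner_toLp hf F

lemma inner_eq_sphInner (F G : Lp ℂ 2 sphMeasure) : inner ℂ G F = sphInner F G :=
  L2.inner_def G F

lemma inner_toLp_right_eq_sphInner {f : Sph → ℂ} (hf : MemLp f 2 sphMeasure)
    (G : Lp ℂ 2 sphMeasure) : inner ℂ G (hf.toLp f) = sphInner f G := by
  rw [inner_eq_sphInner, sphInner_eq_integral_inner, sphInner_eq_integral_inner]
  exact integral_congr_ae (hf.coeFn_toLp.mono fun y hy => by simp only [hy])

theorem statement_15_general [Finite ι]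
    (hX : ∀ i, Continuous fun x => (⟨x, X i x⟩ : TangentBundle (𝓡 2) Sph))
    (hXspan : ∀ x, Submodule.span ℝ (Set.range fun i => X i x) = ⊤)
    {a : ℝ} (ha : 1 < a) {κ : ℤ → Type*} [∀ j, Countable (κ j)]
    {E : (j : ℤ) → κ j → Set Sph} {xp : (j : ℤ) → κ j → Sph}
    (hE : ∀ j, IsCellFamily (a ^ j) (E j) (xp j)) {φ ψ : (j : ℤ) → κ j → Sph → ℂ}
    (hφ : ∀ j k, φ j k ∈ MClass X (xp j k) (a ^ j))
    (hψ : ∀ j k, ψ j k ∈ MClass X (xp j k) (a ^ j))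
    (hmψ : ∀ j k, MemLp (ψ j k) 2 sphMeasure)
    (S : Lp ℂ 2 sphMeasure →L[ℂ] Lp ℂ 2 sphMeasure)
    (hS : ∀ F : Sph → ℂ, ContMDiff (𝓡 2) 𝓘(ℝ, ℂ) (⊤ : ℕ∞) F →
      ∀ hm : MemLp F 2 sphMeasure,
        S (hm.toLp F) =ᵐ[sphMeasure] fun x => ∑' p : Σ j, κ j,
          sphMeasure.real (E p.1 p.2) * sphInner F (φ p.1 p.2) * ψ p.1 p.2 x) :
    (∀ F : Lp ℂ 2 sphMeasure, HasSum (fun p : Σ j, κ j =>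
      (sphMeasure.real (E p.1 p.2) * sphInner F (φ p.1 p.2)) •
        (hmψ p.1 p.2).toLp (ψ p.1 p.2)) (S F)) ∧
    ∀ F G : Lp ℂ 2 sphMeasure,
      (Summable fun p : Σ j, κ j => ‖sphMeasure.real (E p.1 p.2) * sphInner F (φ p.1 p.2) *
        sphInner (ψ p.1 p.2) G‖) ∧
      ∑' p : Σ j, κ j, sphMeasure.real (E p.1 p.2) * sphInner F (φ p.1 p.2) *
        sphInner (ψ p.1 p.2) G = sphInner (S F) G := by
  obtain ⟨A, hA⟩ := exists_isMolecule_of_mem_mClass hX hXspan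
  have ha0 (j : ℤ) : 0 < a ^ j := zpow_pos (one_pos.trans ha) j
  have φ_molecule (j k) := hA (ha0 j) (hφ j k)
  have ψ_molecule (j k) := hA (ha0 j) (hψ j k)
  have memLp {f : Sph → ℂ} (hf : Continuous f) : MemLp f 2 sphMeasure :=
    hf.memLp_of_hasCompactSupport (.of_compactSpace f)
  have hmφ (j k) := memLp (φ_molecule j k).continuous
  have hasSum_S (F) := hasSum_inner_toLp_smul_toLp isUpperRegular_sphMeasure two_ne_zero ha hE
    φ_molecule ψ_molecule hmφ hmψ _ (denseRange_toLp_contMDiff (W := ℂ) (𝓡 2) sphMeasure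
      fun F => memLp F.2.continuous)
    (fun F => exists_lipschitzWith_of_contMDiff hX hXspan (F.2.of_le (by simp)))
    S (fun F => hS F.1 F.2 (memLp F.2.continuous)) F
  have summable_inner := summable_norm_inner_toLp_mul_inner_toLp ℂ isUpperRegular_sphMeasure ha hE
    φ_molecule ψ_molecule hmφ hmψ
  have hasSum_inner (F G) := (innerSL ℂ G).hasSum (hasSum_S F)
  simp only [innerSL_apply_apply, inner_smul_right, inner_toLp_eq_sphInner,
    inner_toLp_right_eq_sphInner] at hasSum_S summable_inner hasSum_inner
  exact ⟨hasSum_S, fun F G =>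
    ⟨summable_inner F G, (hasSum_inner F G).tsum_eq.trans (inner_eq_sphInner (S F) G)⟩⟩

end SummationOperator

/-- **The summation operator theorem on `S²` (parts (c) and (d)).**
With `𝒫`, `a > 1`, partitions `{E_{j,k}}` of `S²` of geodesic diameter `< a^j`,
points `x_{j,k} ∈ E_{j,k}`, `φ_{j,k}, ψ_{j,k} ∈ ℳ_{x_{j,k},a^j}` as in the summation
operator theorem, and `S` the bounded operator on `L²(S²)` satisfying
`SF = ∑_{j,k} μ(E_{j,k})⟨F,φ_{j,k}⟩ψ_{j,k}` for `F ∈ C¹(S²)`: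
(c) for every `F ∈ L²(S²)` the series `∑_{j,k} μ(E_{j,k})⟨F,φ_{j,k}⟩ψ_{j,k}`
converges unconditionally in `L²` to `SF`; and (d) for all `F, G ∈ L²(S²)`,
`⟨SF,G⟩ = ∑_{j,k} μ(E_{j,k})⟨F,φ_{j,k}⟩⟨ψ_{j,k},G⟩`, the series converging
absolutely. -/
theorem statement_15
    (ι : Type*) [Fintype ι] (X : ι → (x : Sph) → TangentSpace (𝓡 2) x)
    (hXsmooth : ∀ i, ContMDiff (𝓡 2) (𝓡 2).tangent (⊤ : ℕ∞)
      (fun x => (⟨x, X i x⟩ : TangentBundle (𝓡 2) Sph)))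
    (hXspan : ∀ x : Sph, Submodule.span ℝ (Set.range fun i => X i x) = ⊤)
    (a : ℝ) (ha : 1 < a)
    (N : ℤ → ℕ) (E : (j : ℤ) → Fin (N j) → Set Sph)
    (hEmeas : ∀ j k, MeasurableSet (E j k))
    (hEdisj : ∀ j, Pairwise fun k k' => Disjoint (E j k) (E j k'))
    (hEcover : ∀ j, (⋃ k, E j k) = Set.univ)
    (hEdiam : ∀ j k, ∀ y ∈ E j k, ∀ z ∈ E j k, gdist y z < a ^ j)
    (xp : (j : ℤ) → Fin (N j) → Sph) (hxp : ∀ j k, xp j k ∈ E j k)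
    (φ ψ : (j : ℤ) → Fin (N j) → (Sph → ℂ))
    (hφ : ∀ j k, φ j k ∈ MClass X (xp j k) (a ^ j))
    (hψ : ∀ j k, ψ j k ∈ MClass X (xp j k) (a ^ j))
    (hmψ : ∀ j k, MemLp (ψ j k) 2 sphMeasure)
    (S : Lp ℂ 2 sphMeasure →L[ℂ] Lp ℂ 2 sphMeasure)
    (hS : ∀ F : Sph → ℂ, ContMDiff (𝓡 2) 𝓘(ℝ, ℂ) 1 F →
      ∀ hm : MemLp F 2 sphMeasure,
        (S (hm.toLp F) : Sph → ℂ) =ᵐ[sphMeasure]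
          fun x : Sph => ∑' p : (j : ℤ) × Fin (N j),
            (sphMeasure (E p.1 p.2)).toReal * sphInner F (φ p.1 p.2) * ψ p.1 p.2 x) :
    -- (c) unconditional convergence in `L²`
    (∀ F : Lp ℂ 2 sphMeasure,
      HasSum
        (fun p : (j : ℤ) × Fin (N j) =>
          ((sphMeasure (E p.1 p.2)).toReal * sphInner (F : Sph → ℂ) (φ p.1 p.2)) •
            ((hmψ p.1 p.2).toLp (ψ p.1 p.2)))
        (S F)) ∧
    -- (d) absolutely convergent expansion of `⟨SF,G⟩`
    (∀ F G : Lp ℂ 2 sphMeasure,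
      Summable
        (fun p : (j : ℤ) × Fin (N j) =>
          ‖(sphMeasure (E p.1 p.2)).toReal * sphInner (F : Sph → ℂ) (φ p.1 p.2) *
            sphInner (ψ p.1 p.2) (G : Sph → ℂ)‖) ∧
      (∑' p : (j : ℤ) × Fin (N j),
          (sphMeasure (E p.1 p.2)).toReal * sphInner (F : Sph → ℂ) (φ p.1 p.2) *
            sphInner (ψ p.1 p.2) (G : Sph → ℂ)) =
        sphInner (S F : Sph → ℂ) (G : Sph → ℂ)) :=
  statement_15_general (fun i => (hXsmooth i).continuous) hXspan ha
    (fun j => isCellFamily_of_gdist_lt (hEmeas j) (hEdisj j) (hEdiam j) (hxp j)) hφ hψ hmψ S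
    fun F hF => hS F (hF.of_le (by simp))
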